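/- arXiv:math/9811004 — 6 statements merged into one kernel-verified Lean document; each statement's English description precedes it below -/
import Mathlib

section
/- Let P be a finite regular p-group with ω_1(P) ≥ 2 and μ_1(P) = μ_2(P) ≥ 2. Then for every i with 1 ≤ i ≤ μ_1(P) - 1, the left-normed iterated commutator subgroup [℧_i(P), P, ..., P], with P repeated ω_{i+1}(P) - 1 times, is contained in ℧_{i+1}(P). -/
/-- `℧_1(H) = ⟨h^p : h ∈ H⟩` for a subgroup `H`. -/
def MhoOne (p : ℕ) {P : Type} [Group P] (H : Subgroup P) : Subgroup P :=
  Subgroup.closure {y : P | ∃ x ∈ H, y = x ^ p}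

/-- A `p`-group `P` is regular if for all `x y : P` there is
`z ∈ ℧_1(γ_2(⟨x,y⟩))` with `x^p * y^p = (x*y)^p * z`. -/
def IsRegularPGroup (p : ℕ) (P : Type) [Group P] : Prop :=
  ∀ x y : P,
    ∃ z ∈ MhoOne p ⁅Subgroup.closure {x, y}, Subgroup.closure {x, y}⁆,
      x ^ p * y ^ p = (x * y) ^ p * z

/-- `Ω_i(P) = ⟨x : x^(p^i) = 1⟩`. -/
def OmegaSubgroup (p : ℕ) (P : Type) [Group P] (i : ℕ) : Subgroup P :=
  Subgroup.closure {x : P | x ^ p ^ i = 1}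

/-- `℧_i(P) = ⟨x^(p^i) : x ∈ P⟩`. -/
def MhoSubgroup (p : ℕ) (P : Type) [Group P] (i : ℕ) : Subgroup P :=
  Subgroup.closure {y : P | ∃ x : P, y = x ^ p ^ i}

/-- `ω_i(P)`, defined by `p ^ ω_i(P) = |Ω_i(P)/Ω_{i-1}(P)|`. -/
noncomputable def omegaInv (p : ℕ) (P : Type) [Group P] (i : ℕ) : ℕ :=
  ((OmegaSubgroup p P (i - 1)).relIndex (OmegaSubgroup p P i)).factorization p

/-- `μ_j(P)` (for `j ≥ 1`): the dual partition of `(ω_1(P), ω_2(P), ...)`. -/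
noncomputable def muInv (p : ℕ) (P : Type) [Group P] (j : ℕ) : ℕ :=
  Nat.card {i : ℕ // 1 ≤ i ∧ j ≤ omegaInv p P i}

/-- The left-normed iterated commutator `[H, P, P, ..., P]` (`k` copies of `P`). -/
def iterCommutator {P : Type} [Group P] (H : Subgroup P) : ℕ → Subgroup P
  | 0 => H
  | (k + 1) => ⁅iterCommutator H k, (⊤ : Subgroup P)⁆

namespace RegAux

open Subgroup
open scoped commutatorElement

set_option linter.unusedSectionVars false

variable {G : Type} [Group G]

/-- q-regularity. -/
def Reg (q : ℕ) (G : Type) [Group G] : Prop :=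
  ∀ x y : G, ∃ z ∈ MhoOne q ⁅closure {x, y}, closure {x, y}⁆, x ^ q * y ^ q = (x * y) ^ q * z

lemma mho_mono (q : ℕ) {H K : Subgroup G} (h : H ≤ K) : MhoOne q H ≤ MhoOne q K := by
  apply Subgroup.closure_mono
  rintro _ ⟨x, hx, rfl⟩
  exact ⟨x, h hx, rfl⟩

lemma pow_mem_mho (q : ℕ) {H : Subgroup G} {x : G} (h : x ∈ H) : x ^ q ∈ MhoOne q H :=
  subset_closure ⟨x, h, rfl⟩

lemma mho_le {q : ℕ} {H : Subgroup G} (h : ∀ c ∈ H, c ^ q = 1) {z : G} (hz : z ∈ MhoOne q H) :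
    z = 1 := by
  have : MhoOne q H ≤ ⊥ := by
    unfold MhoOne
    rw [closure_le]
    rintro _ ⟨x, hx, rfl⟩
    simpa using h x hx
  simpa using this hz

lemma comm_le_frattini [Finite G] [Group.IsNilpotent G] : commutator G ≤ frattini G := by
  unfold frattini Order.radical
  refine le_iInf₂ fun M hM => ?_
  have hM : IsCoatom M := hM
  have hn : M.Normal := NormalizerCondition.normal_of_coatom M Group.normalizerCondition_of_isNilpotent hM
  obtain ⟨g, hg⟩ : ∃ g, g ∉ M := by
    by_contra! h
    exact hM.1 ((eq_top_iff' M).2 h)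
  apply Subgroup.Normal.commutator_le_of_self_sup_commutative_eq_top (H := zpowers g)
  · apply hM.2
    refine lt_of_le_of_ne le_sup_left fun h => hg ?_
    rw [h]
    exact mem_sup_right (mem_zpowers g)
  · infer_instance

lemma L0 [Finite G] [Group.IsNilpotent G] (H : Subgroup G) (w : G) (hw : w ∈ H)
    (hne : ⁅H, H⁆ ≠ ⊥) : zpowers w ⊔ ⁅H, H⁆ < H := by
  refine lt_of_le_of_ne (sup_le ((zpowers_le).2 hw) (H.commutator_le_self)) fun h => hne ?_
  have h1 : zpowers (⟨w, hw⟩ : H) ⊔ commutator H = ⊤ := by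
    apply map_injective H.subtype_injective
    rw [Subgroup.map_sup, map_subtype_commutator, MonoidHom.map_zpowers]
    simpa [← MonoidHom.range_eq_map] using h
  have h2 : zpowers (⟨w, hw⟩ : H) = ⊤ := by
    apply frattini_nongenerating
    rw [eq_top_iff, ← h1]
    exact sup_le_sup_left comm_le_frattini _
  rw [commutator_self_eq_bot_iff]
  have h3 : H = zpowers w := by
    have := congrArg (map H.subtype) h2
    rw [MonoidHom.map_zpowers] at this
    simpa [← MonoidHom.range_eq_map] using this.symm
  rw [h3]
  infer_instance

lemma L1 (x y : G) (N : Subgroup G)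
    (hN : ∀ h ∈ closure {x, y}, h * ⁅x, y⁆ * h⁻¹ ∈ N) :
    ⁅closure {x, y}, closure {x, y}⁆ ≤ N := by
  set H := closure {x, y} with hH
  have hx : x ∈ H := subset_closure (by simp)
  have hy : y ∈ H := subset_closure (by simp)
  let N' : Subgroup H := normalClosure {⁅(⟨x, hx⟩ : H), ⟨y, hy⟩⁆}
  have hN' : N' ≤ N.subgroupOf H := by
    apply (closure_le _).2
    intro c hc
    simp only [Group.mem_conjugatesOfSet_iff, Set.mem_singleton_iff, exists_eq_left, isConj_iff] at hc
    obtain ⟨k, rfl⟩ := hc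
    exact hN k k.2
  have hgen : closure {(⟨x, hx⟩ : H), ⟨y, hy⟩} = ⊤ := by
    apply map_injective H.subtype_injective
    rw [MonoidHom.map_closure, ← MonoidHom.range_eq_map, range_subtype, Set.image_pair]
    rfl
  have hcomm : (QuotientGroup.mk' N' ⟨x, hx⟩) * (QuotientGroup.mk' N' ⟨y, hy⟩) =
     (QuotientGroup.mk' N' ⟨y, hy⟩) * (QuotientGroup.mk' N' ⟨x, hx⟩) := by
    rw [← commutatorElement_eq_one_iff_mul_comm, ← map_commutatorElement]
    simp only [QuotientGroup.mk'_apply, QuotientGroup.eq_one_iff]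
    exact subset_normalClosure rfl
  have hg2 : closure {QuotientGroup.mk' N' ⟨x, hx⟩, QuotientGroup.mk' N' ⟨y, hy⟩} = ⊤ := by
    rw [← Set.image_pair, ← MonoidHom.map_closure, hgen, ← MonoidHom.range_eq_map]
    exact MonoidHom.range_eq_top.2 (QuotientGroup.mk'_surjective N')
  have hc : IsMulCommutative (closure {QuotientGroup.mk' N' ⟨x, hx⟩, QuotientGroup.mk' N' ⟨y, hy⟩}) := by
    apply isMulCommutative_closure
    rintro a (rfl | rfl) b (rfl | rfl)
    · rfl
    · exact hcomm
    · exact hcomm.symm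
    · rfl
  rw [hg2] at hc
  rw [commutator_le]
  intro a ha b hb
  have : ⁅(⟨a, ha⟩ : H), ⟨b, hb⟩⁆ ∈ N' := by
    rw [← QuotientGroup.eq_one_iff, ← QuotientGroup.mk'_apply, map_commutatorElement,
      commutatorElement_eq_one_iff_mul_comm]
    have := hc.is_comm.comm ⟨QuotientGroup.mk' N' ⟨a, ha⟩, mem_top _⟩
       ⟨QuotientGroup.mk' N' ⟨b, hb⟩, mem_top _⟩
    simpa using congrArg Subtype.val this
  exact hN' this

lemma conj_mem_comm {H : Subgroup G} {h d : G} (hh : h ∈ H) (hd : d ∈ ⁅H, H⁆) :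
    h * d * h⁻¹ ∈ ⁅H, H⁆ :=
  (mem_normalizer_iff.1 (normalizer_commutator_ge_left (H₁ := H) (H₂ := H) hh) d).1 hd

/-- product closure on a subgroup -/
def PC (q : ℕ) (K : Subgroup G) : Prop :=
  ∀ a ∈ K, ∀ b ∈ K, a ^ q = 1 → b ^ q = 1 → (a * b) ^ q = 1

lemma step {q : ℕ} (hreg : Reg q G) {x y : G} {K : Subgroup G} (hK : PC q K)
    (hle : ⁅closure {x, y}, closure {x, y}⁆ ≤ K) (h1 : ⁅x, y⁆ ^ q = 1) :
    x ^ q * y ^ q = (x * y) ^ q := by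
  have hx : x ∈ closure {x, y} := subset_closure (by simp)
  have hy : y ∈ closure {x, y} := subset_closure (by simp)
  let N : Subgroup G :=
    { carrier := {c | c ∈ K ∧ c ^ q = 1}
      one_mem' := ⟨one_mem _, one_pow _⟩
      mul_mem' := fun {a b} ha hb => ⟨mul_mem ha.1 hb.1, hK a ha.1 b hb.1 ha.2 hb.2⟩
      inv_mem' := fun {a} ha => ⟨inv_mem ha.1, by rw [inv_pow, ha.2, inv_one]⟩ }
  have hN : ⁅closure {x, y}, closure {x, y}⁆ ≤ N := by
    apply L1
    intro h hh
    refine ⟨hle (conj_mem_comm hh (commutator_mem_commutator hx hy)), ?_⟩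
    rw [conj_pow, h1]
    simp
  obtain ⟨z, hz, e⟩ := hreg x y
  have : z = 1 := mho_le (fun c hc => (hN hc).2) hz
  rw [e, this, mul_one]

lemma abel_case {x y : G} (h : ⁅closure {x, y}, closure {x, y}⁆ = ⊥) : Commute x y := by
  have hx : x ∈ closure {x, y} := subset_closure (by simp)
  have hy : y ∈ closure {x, y} := subset_closure (by simp)
  have := commutator_mem_commutator hx hy
  rw [h, mem_bot] at this
  exact commutatorElement_eq_one_iff_commute.1 this

lemma card_lt_of_lt [Finite G] {H K : Subgroup G} (h : H < K) : Nat.card H < Nat.card K :=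
  by
  have h' : (H : Set G) ⊂ K := h
  exact Set.ncard_lt_ncard h'

lemma closure_pair_le {H : Subgroup G} {x y : G} (hx : x ∈ H) (hy : y ∈ H) : closure {x, y} ≤ H := by
  rw [closure_le]
  rintro a (rfl | rfl) <;> assumption

lemma conj_in_K {x y : G} {H : Subgroup G} (hx : x ∈ H) (hy : y ∈ H) :
    y * x * y⁻¹ ∈ zpowers x ⊔ ⁅H, H⁆ := by
  have : y * x * y⁻¹ = ⁅y, x⁆ * x := by group
  rw [this]
  exact mul_mem (mem_sup_right (commutator_mem_commutator hy hx)) (mem_sup_left (mem_zpowers x))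

variable [Finite G] [Group.IsNilpotent G]

lemma pc_aux {q : ℕ} (hreg : Reg q G) : ∀ (n : ℕ) (H : Subgroup G), Nat.card H = n → PC q H := by
  intro n
  induction n using Nat.strong_induction_on with
  | _ n ih =>
  rintro H rfl x hx y hy hxq hyq
  by_cases hab : ⁅closure {x, y}, closure {x, y}⁆ = ⊥
  · rw [(abel_case hab).mul_pow, hxq, hyq, one_mul]
  have hx' : x ∈ closure {x, y} := subset_closure (by simp)
  have hy' : y ∈ closure {x, y} := subset_closure (by simp)
  have hlt := L0 (closure {x, y}) x hx' hab
  have hK := ih _ (card_lt_of_lt (hlt.trans_le (closure_pair_le hx hy))) _ rfl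
  rw [← step hreg hK le_sup_right, hxq, hyq, one_mul]
  have e : ⁅x, y⁆ = x * (y * x * y⁻¹)⁻¹ := by group
  rw [e]
  refine hK _ (mem_sup_left (mem_zpowers x)) _ (inv_mem (conj_in_K hx' hy')) hxq ?_
  rw [inv_pow, conj_pow, hxq]; simp

lemma pc {q : ℕ} (hreg : Reg q G) (H : Subgroup G) : PC q H := pc_aux hreg _ H rfl

lemma a_aux {q : ℕ} (hreg : Reg q G) : ∀ (n : ℕ) (H : Subgroup G), Nat.card H = n →
    ∀ x ∈ H, ∀ y ∈ H, x ^ q = y ^ q → (x⁻¹ * y) ^ q = 1 := by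
  intro n
  induction n using Nat.strong_induction_on with
  | _ n ih =>
  rintro H rfl x hx y hy hxy
  by_cases hab : ⁅closure {x⁻¹, y}, closure {x⁻¹, y}⁆ = ⊥
  · rw [(abel_case hab).mul_pow, ← hxy]; simp
  have hx' : x ∈ closure {x⁻¹, y} := by
    rw [← inv_mem_iff]; exact subset_closure (by simp)
  have hy' : y ∈ closure {x⁻¹, y} := subset_closure (by simp)
  have hlt := L0 (closure {x⁻¹, y}) x hx' hab
  rw [← step hreg (pc hreg ⊤) le_top, ← hxy]
  · simp
  have e : ⁅x⁻¹, y⁆ = x⁻¹ * (y * x * y⁻¹) := by group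
  rw [e]
  apply ih _ (card_lt_of_lt (hlt.trans_le (closure_pair_le (inv_mem hx) hy))) _ rfl _
    (mem_sup_left (mem_zpowers x)) _ (conj_in_K hx' hy')
  rw [conj_pow, hxy]; group

lemma pow_eq_iff {q : ℕ} (hreg : Reg q G) (x y : G) : x ^ q = y ^ q ↔ (x⁻¹ * y) ^ q = 1 := by
  refine ⟨a_aux hreg _ ⊤ rfl x trivial y trivial, fun h => ?_⟩
  have := step hreg (x := x) (y := x⁻¹ * y) (pc hreg ⊤) le_top ?_
  · rw [h] at this
    simpa using this
  have e : ⁅x, x⁻¹ * y⁆ = (x * (x⁻¹ * y) * x⁻¹) * (x⁻¹ * y)⁻¹ := by group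
  rw [e]
  refine pc hreg ⊤ _ trivial _ trivial ?_ ?_
  · rw [conj_pow, h]; simp
  · rw [inv_pow, h]; simp

lemma d_close {q : ℕ} {H : Subgroup G}
    (h : ∀ x ∈ H, ∀ y ∈ H, ∃ t ∈ H, x ^ q * y ^ q = t ^ q) {z : G} (hz : z ∈ MhoOne q H) :
    ∃ t ∈ H, z = t ^ q := by
  unfold MhoOne at hz
  induction hz using closure_induction with
  | mem x hx => exact hx
  | one => exact ⟨1, one_mem _, (one_pow _).symm⟩
  | mul a b _ _ ha hb =>
    obtain ⟨s, hs, rfl⟩ := ha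
    obtain ⟨t, ht, rfl⟩ := hb
    exact h s hs t ht
  | inv a _ ha =>
    obtain ⟨s, hs, rfl⟩ := ha
    exact ⟨s⁻¹, inv_mem hs, (inv_pow _ _).symm⟩

lemma d_aux {q : ℕ} (hreg : Reg q G) : ∀ (n : ℕ) (H : Subgroup G), Nat.card H = n →
    ∀ x ∈ H, ∀ y ∈ H, ∃ t ∈ H, x ^ q * y ^ q = t ^ q := by
  intro n
  induction n using Nat.strong_induction_on with
  | _ n ih =>
  rintro H rfl x hx y hy
  by_cases hab : ⁅closure {x, y}, closure {x, y}⁆ = ⊥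
  · exact ⟨x * y, mul_mem hx hy, ((abel_case hab).mul_pow q).symm⟩
  have hx' : x ∈ closure {x, y} := subset_closure (by simp)
  have hy' : y ∈ closure {x, y} := subset_closure (by simp)
  have hlt := (L0 (closure {x, y}) (x * y) (mul_mem hx' hy') hab).trans_le (closure_pair_le hx hy)
  obtain ⟨z, hz, e⟩ := hreg x y
  obtain ⟨s, hs, rfl⟩ := d_close (ih _ (card_lt_of_lt (lt_of_le_of_lt le_sup_right hlt)) _ rfl) hz
  obtain ⟨t, ht, e'⟩ := ih _ (card_lt_of_lt hlt) _ rfl _ (mem_sup_left (mem_zpowers _)) _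
    (mem_sup_right hs)
  exact ⟨t, hlt.le ht, e.trans e'⟩

lemma mem_mho {q : ℕ} (hreg : Reg q G) {H : Subgroup G} {z : G} :
    z ∈ MhoOne q H ↔ ∃ t ∈ H, z = t ^ q :=
  ⟨d_close (d_aux hreg _ H rfl), fun ⟨_, ht, e⟩ => e ▸ pow_mem_mho q ht⟩

lemma comm_pow_mem {q : ℕ} (hreg : Reg q G) {H : Subgroup G} {x b : G} (hx : x ∈ H) (hb : b ∈ H) :
    ⁅x ^ q, b⁆ ∈ MhoOne q ⁅H, H⁆ := by
  obtain ⟨z, hz, e⟩ := hreg x (b * x⁻¹ * b⁻¹)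
  have e1 : ⁅x ^ q, b⁆ = x ^ q * (b * x⁻¹ * b⁻¹) ^ q := by
    rw [conj_pow, inv_pow, commutatorElement_def]; group
  have hle := closure_pair_le hx (mul_mem (mul_mem hb (inv_mem hx)) (inv_mem hb))
  rw [e1, e]
  refine mul_mem (pow_mem_mho _ ?_) (mho_mono q (commutator_mono hle hle) hz)
  have : x * (b * x⁻¹ * b⁻¹) = ⁅x, b⁆ := by group
  rw [this]
  exact commutator_mem_commutator hx hb

lemma comm_pow_le {q : ℕ} (hreg : Reg q G) {H : Subgroup G} {x y : G} (hx : x ∈ H) (hy : y ∈ H) :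
    ⁅closure {x ^ q, y ^ q}, closure {x ^ q, y ^ q}⁆ ≤ MhoOne q ⁅H, H⁆ := by
  apply L1
  intro h hh
  have hh : h ∈ H := closure_pair_le (pow_mem hx q) (pow_mem hy q) hh
  obtain ⟨t, ht, e⟩ := (mem_mho hreg).1 (comm_pow_mem hreg hx (pow_mem hy q))
  rw [e, ← conj_pow]
  exact pow_mem_mho q (conj_mem_comm hh ht)

lemma reg_mul {p q : ℕ} (hp : Reg p G) (hq : Reg q G) : Reg (q * p) G := by
  intro x y
  have hx : x ∈ closure {x, y} := subset_closure (by simp)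
  have hy : y ∈ closure {x, y} := subset_closure (by simp)
  set H := closure {x, y}
  obtain ⟨z1, hz1, e1⟩ := hp (x ^ q) (y ^ q)
  obtain ⟨e, he, rfl⟩ := (mem_mho hp).1 hz1
  obtain ⟨f, hf, rfl⟩ := (mem_mho hq).1 (comm_pow_le hq hx hy he)
  obtain ⟨z2, hz2, e2⟩ := hq x y
  obtain ⟨d, hd, rfl⟩ := (mem_mho hq).1 hz2
  obtain ⟨z3, hz3, e3⟩ := hp ((x * y) ^ q) (d ^ q)
  obtain ⟨g, hg, rfl⟩ := (mem_mho hp).1 hz3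
  obtain ⟨h, hh, rfl⟩ := (mem_mho hq).1
    (comm_pow_le hq (mul_mem hx hy) (H.commutator_le_self hd) hg)
  refine ⟨d ^ (q * p) * (h ^ (q * p))⁻¹ * f ^ (q * p), ?_, ?_⟩
  · exact mul_mem (mul_mem (pow_mem_mho _ hd) (inv_mem (pow_mem_mho _ hh))) (pow_mem_mho _ hf)
  · simp only [pow_mul]
    rw [e1, e2]
    rw [← mul_inv_eq_iff_eq_mul] at e3
    rw [← e3]
    group

lemma reg_one : Reg 1 G := fun x y => ⟨1, one_mem _, by simp⟩

lemma reg_pow {p : ℕ} (hp : Reg p G) (i : ℕ) : Reg (p ^ i) G := by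
  induction i with
  | zero => simpa using reg_one
  | succ i ih => rw [pow_succ]; exact reg_mul hp ih

/-- the subgroup of elements killed by q -/
def Om {q : ℕ} (hreg : Reg q G) : Subgroup G where
  carrier := {c | c ^ q = 1}
  one_mem' := one_pow _
  mul_mem' := fun {a b} ha hb => pc hreg ⊤ a trivial b trivial ha hb
  inv_mem' := fun {a} ha => by
    have ha : a ^ q = 1 := ha
    show a⁻¹ ^ q = 1
    rw [inv_pow, ha, inv_one]

lemma mem_Om {q : ℕ} (hreg : Reg q G) (x : G) : x ∈ Om hreg ↔ x ^ q = 1 := Iff.rfl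

instance {q : ℕ} (hreg : Reg q G) : (Om hreg).Normal where
  conj_mem := fun n hn g => by
    rw [mem_Om] at hn ⊢
    rw [conj_pow, hn]; simp

lemma card_mho {q : ℕ} (hreg : Reg q G) (H : Subgroup G) :
    Nat.card (MhoOne q H) = (Om hreg).relIndex H := by
  unfold relIndex index
  symm
  let f : H ⧸ (Om hreg).subgroupOf H → MhoOne q H :=
    Quotient.lift (s := QuotientGroup.leftRel ((Om hreg).subgroupOf H))
      (fun x : H => (⟨(x : G) ^ q, pow_mem_mho q x.2⟩ : MhoOne q H)) (by
        intro a b hab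
        have hab := QuotientGroup.leftRel_apply.1 hab
        apply Subtype.ext
        exact (pow_eq_iff hreg _ _).2 hab)
  apply Nat.card_eq_of_bijective f
  constructor
  · rintro ⟨a⟩ ⟨b⟩ hab
    apply Quotient.sound (s := QuotientGroup.leftRel ((Om hreg).subgroupOf H))
    apply QuotientGroup.leftRel_apply.2
    exact (pow_eq_iff hreg _ _).1 (congrArg Subtype.val hab)
  · rintro ⟨z, hz⟩
    obtain ⟨t, ht, rfl⟩ := (mem_mho hreg).1 hz
    exact ⟨QuotientGroup.mk ⟨t, ht⟩, rfl⟩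

lemma pow_mem_frattini {p : ℕ} (hpg : IsPGroup p G) (x : G) : x ^ p ∈ frattini G := by
  unfold frattini Order.radical
  simp only [mem_iInf]
  intro M hM
  have hM : IsCoatom M := hM
  have hn : M.Normal :=
    NormalizerCondition.normal_of_coatom M Group.normalizerCondition_of_isNilpotent hM
  by_contra hx
  have htop : zpowers (x ^ p) ⊔ M = ⊤ := by
    apply hM.2
    refine lt_of_le_of_ne le_sup_right fun h => hx ?_
    rw [h]
    exact mem_sup_left (mem_zpowers _)
  have hxm : x ∈ zpowers (x ^ p) ⊔ M := htop ▸ mem_top x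
  rw [mem_sup_of_normal_right] at hxm
  obtain ⟨_, ⟨k, rfl⟩, m, hm, e⟩ := hxm
  simp only at e
  have hm' : x ^ (1 - p * k : ℤ) ∈ M := by
    have : x ^ (1 - p * k : ℤ) = m := by
      rw [sub_eq_neg_add, zpow_add, zpow_neg, zpow_one, zpow_mul, zpow_natCast, inv_mul_eq_iff_eq_mul, e]
    rwa [this]
  obtain ⟨n, hn'⟩ := hpg x
  have hcop : IsCoprime (1 - p * k : ℤ) ((p : ℤ) ^ n) := by
    apply IsCoprime.pow_right
    exact ⟨1, k, by ring⟩
  obtain ⟨u, v, huv⟩ := hcop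
  have hxM : x ∈ M := by
    have : x = (x ^ (1 - p * k : ℤ)) ^ u * (x ^ p ^ n) ^ v := by
      rw [← zpow_natCast, ← zpow_mul, ← zpow_mul, ← zpow_add]
      push_cast
      rw [mul_comm _ u, mul_comm _ v, huv, zpow_one]
    rw [this, hn', one_zpow, mul_one]
    exact zpow_mem hm' u
  exact hx (pow_mem hxM p)

lemma exists_gen {p : ℕ} (hp : p.Prime) (hpg : IsPGroup p G) (O : Subgroup G) [O.Normal]
    (h : (frattini G ⊔ O).index < p ^ 2) : ∃ x, zpowers x ⊔ O = ⊤ := by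
  have := Fact.mk hp
  obtain ⟨n, hn⟩ := hpg.index (frattini G ⊔ O)
  have hn2 : n < 2 := by
    rw [hn] at h
    exact (Nat.pow_lt_pow_iff_right hp.one_lt).1 h
  have hcyc : IsCyclic (G ⧸ (frattini G ⊔ O)) := by
    interval_cases n
    · have : Subsingleton (G ⧸ (frattini G ⊔ O)) := by
        rw [← Finite.card_le_one_iff_subsingleton]
        exact le_of_eq (by simpa [index] using hn)
      infer_instance
    · exact isCyclic_of_prime_card (p := p) (by simpa [index] using hn)
  obtain ⟨g, hg⟩ := hcyc.exists_generator
  obtain ⟨x, rfl⟩ := QuotientGroup.mk_surjective g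
  refine ⟨x, frattini_nongenerating ?_⟩
  rw [eq_top_iff]
  intro y _
  obtain ⟨k, hk⟩ := hg y
  have hk : ((x ^ k : G) : G ⧸ (frattini G ⊔ O)) = y := hk
  rw [QuotientGroup.eq] at hk
  have e : y = x ^ k * ((x ^ k)⁻¹ * y) := by group
  rw [e, sup_assoc, sup_comm O]
  exact mul_mem (mem_sup_left (zpow_mem (mem_zpowers x) k)) (mem_sup_right hk)

lemma relIndex_le {p : ℕ} (hp : p.Prime) (O K : Subgroup G) [O.Normal] (x : G)
    (hx : zpowers x ⊔ O = ⊤) (h : ∀ y ∈ K, y ^ p ∈ O) : O.relIndex K ≤ p := by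
  classical
  have hcyc : IsCyclic (G ⧸ O) := by
    refine ⟨x, fun y => ?_⟩
    obtain ⟨y, rfl⟩ := QuotientGroup.mk_surjective y
    have hy : y ∈ zpowers x ⊔ O := hx ▸ mem_top y
    rw [mem_sup_of_normal_right] at hy
    obtain ⟨_, ⟨k, rfl⟩, m, hm, e⟩ := hy
    refine ⟨k, ?_⟩
    show ((x ^ k : G) : G ⧸ O) = y
    rw [QuotientGroup.eq, ← e]
    simpa using hm
  have := Fintype.ofFinite (G ⧸ O)
  have h1 := IsCyclic.card_pow_eq_one_le (α := G ⧸ O) hp.pos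
  refine le_trans ?_ h1
  have h2 : O.relIndex K = Nat.card (K.map (QuotientGroup.mk' O)) := by
    rw [← relIndex_bot_left, ← relIndex_comap, MonoidHom.comap_bot, QuotientGroup.ker_mk']
  rw [h2, ← Nat.card_eq_finsetCard]
  refine Nat.card_le_card_of_injective (fun a => ⟨a.1, ?_⟩) ?_
  · obtain ⟨_, y, hy, rfl⟩ := a
    simp only [Finset.mem_filter, Finset.mem_univ, true_and]
    rw [← map_pow]
    exact (QuotientGroup.eq_one_iff _).2 (h y hy)
  · intro a b hab
    exact Subtype.ext (Subtype.mk.inj hab)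

lemma comm_sup_le (X B : Subgroup G) [B.Normal] :
    ⁅X ⊔ B, (⊤ : Subgroup G)⁆ ≤ ⁅X, (⊤ : Subgroup G)⁆ ⊔ B := by
  rw [commutator_le]
  intro g hg y hy
  rw [mem_sup_of_normal_right] at hg
  obtain ⟨x, hx, b, hb, rfl⟩ := hg
  have e : ⁅x * b, y⁆ = (x * ⁅b, y⁆ * x⁻¹) * ⁅x, y⁆ := by group
  rw [e]
  refine mul_mem (mem_sup_right ?_) (mem_sup_left (commutator_mem_commutator hx hy))
  apply Normal.conj_mem inferInstance
  exact commutator_le_left B ⊤ (commutator_mem_commutator hb hy)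

lemma collapse (X B : Subgroup G) [B.Normal] (h : X ≤ ⁅X, (⊤ : Subgroup G)⁆ ⊔ B) : X ≤ B := by
  have h1 : ∀ n, X ≤ (⊤ : Subgroup G).lowerCentralSeries n ⊔ B := by
    intro n
    induction n with
    | zero => simp
    | succ n ih =>
      refine h.trans (sup_le ?_ le_sup_right)
      exact (commutator_mono ih le_rfl).trans (comm_sup_le _ _)
  obtain ⟨n, hn⟩ := Subgroup.nilpotent_iff_lowerCentralSeries.1 (inferInstance : Group.IsNilpotent G)
  simpa [hn] using h1 n

instance iter_normal (A : Subgroup G) [A.Normal] (k : ℕ) : (iterCommutator A k).Normal := by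
  induction k with
  | zero => assumption
  | succ k ih => exact commutator_normal _ _

lemma p_card_le {p : ℕ} (hp : p.Prime) (hpg : IsPGroup p G) {A B : Subgroup G} (h : A < B) :
    p * Nat.card A ≤ Nat.card B := by
  have := Fact.mk hp
  obtain ⟨n, hn⟩ := (hpg.to_subgroup B).index (A.subgroupOf B)
  have h1 : Nat.card A * p ^ n = Nat.card B := by
    have := relIndex_mul_relIndex ⊥ A B bot_le h.le
    rw [relIndex_bot_left, relIndex_bot_left] at this
    rw [← this, ← hn]; rfl
  have hn0 : n ≠ 0 := by
    rintro rfl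
    have : B ≤ A := relIndex_eq_one.1 hn
    exact absurd h this.not_gt
  rw [← h1, mul_comm]
  exact Nat.mul_le_mul_left _ (Nat.le_self_pow hn0 p)

lemma chain {p : ℕ} (hp : p.Prime) (hpg : IsPGroup p G) (A B F : Subgroup G) [A.Normal] [B.Normal]
    (w : ℕ)
    (hcard : Nat.card A = p ^ w * Nat.card B) (hF : p ^ 2 * Nat.card F ≤ Nat.card A)
    (hBF : B ≤ F) (hAF : ⁅A, (⊤ : Subgroup G)⁆ ≤ F) :
    iterCommutator A (w - 1) ≤ B := by
  have key : ∀ k, iterCommutator A (k + 1) ≤ B ∨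
      p ^ (k + 2) * Nat.card (iterCommutator A (k + 1) ⊔ B : Subgroup G) ≤ Nat.card A := by
    intro k
    induction k with
    | zero =>
      right
      refine le_trans (Nat.mul_le_mul_left _ ?_) hF
      exact card_le_of_le (sup_le hAF hBF)
    | succ k ih =>
      have hle : iterCommutator A (k + 1 + 1) ≤ iterCommutator A (k + 1) := commutator_le_left _ _
      rcases ih with ih | ih
      · exact Or.inl (hle.trans ih)
      by_cases hB : iterCommutator A (k + 1) ≤ B
      · exact Or.inl (hle.trans hB)
      right
      have hlt : iterCommutator A (k + 1 + 1) ⊔ B < iterCommutator A (k + 1) ⊔ B := by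
        refine lt_of_le_of_ne (sup_le_sup_right hle _) fun h => hB (collapse _ _ ?_)
        exact le_sup_left.trans h.ge
      calc p ^ (k + 1 + 2) * _ = p ^ (k + 2) * (p * _) := by rw [← mul_assoc, ← pow_succ]
        _ ≤ _ := (Nat.mul_le_mul_left _ (p_card_le hp hpg hlt)).trans ih
  have hBc : 0 < Nat.card B := Nat.card_pos
  have hw : 2 ≤ w := by
    rw [← Nat.pow_le_pow_iff_right hp.one_lt]
    have h1 := card_le_of_le hBF
    rw [hcard] at hF
    exact Nat.le_of_mul_le_mul_right ((Nat.mul_le_mul_left _ h1).trans hF) hBc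
  obtain ⟨k, rfl⟩ : ∃ k, w = k + 2 := ⟨w - 2, by omega⟩
  rcases key k with h | h
  · exact h
  · rw [hcard] at h
    have h2 := Nat.le_of_mul_le_mul_left h (pow_pos hp.pos _)
    have h3 : B = iterCommutator A (k + 1) ⊔ B := eq_of_le_of_card_ge le_sup_right h2
    exact le_sup_left.trans h3.ge

lemma omega_eq {p : ℕ} (hreg : Reg p G) (i : ℕ) : OmegaSubgroup p G i = Om (reg_pow hreg i) :=
  closure_eq (Om (reg_pow hreg i))

lemma mho_eq (p : ℕ) (i : ℕ) : MhoSubgroup p G i = MhoOne (p ^ i) ⊤ := by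
  simp [MhoSubgroup, MhoOne]

lemma relIndex_omega {p : ℕ} (hp : p.Prime) (hpg : IsPGroup p G) (j : ℕ) :
    (OmegaSubgroup p G (j - 1)).relIndex (OmegaSubgroup p G j) = p ^ omegaInv p G j := by
  have := Fact.mk hp
  obtain ⟨n, hn⟩ := (hpg.to_subgroup (OmegaSubgroup p G j)).index
    ((OmegaSubgroup p G (j - 1)).subgroupOf (OmegaSubgroup p G j))
  have hn : (OmegaSubgroup p G (j - 1)).relIndex (OmegaSubgroup p G j) = p ^ n := hn
  rw [omegaInv, hn, hp.factorization_pow]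
  simp

lemma Om_mono {p : ℕ} (hreg : Reg p G) {i j : ℕ} (h : i ≤ j) :
    Om (reg_pow hreg i) ≤ Om (reg_pow hreg j) := by
  intro x hx
  rw [mem_Om] at hx ⊢
  obtain ⟨k, rfl⟩ := Nat.exists_eq_add_of_le h
  rw [pow_add, pow_mul, hx, one_pow]

instance mho_normal (q : ℕ) : (MhoOne q (⊤ : Subgroup G)).Normal := by
  refine ⟨fun n hn g => ?_⟩
  unfold MhoOne at hn
  induction hn using closure_induction with
  | mem x hx =>
    obtain ⟨t, -, rfl⟩ := hx
    rw [← conj_pow]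
    exact pow_mem_mho q (mem_top _)
  | one => simp
  | mul a b _ _ ha hb =>
    have e : g * (a * b) * g⁻¹ = (g * a * g⁻¹) * (g * b * g⁻¹) := by group
    rw [e]
    exact mul_mem ha hb
  | inv a _ ha =>
    have e : g * a⁻¹ * g⁻¹ = (g * a * g⁻¹)⁻¹ := by group
    rw [e]
    exact inv_mem ha

theorem main {p : ℕ} (hp : p.Prime) (hpg : IsPGroup p G) (hreg : Reg p G) (i : ℕ)
    (hj : ∃ j, i + 1 ≤ j ∧ 2 ≤ omegaInv p G j) :
    iterCommutator (MhoSubgroup p G i) (omegaInv p G (i + 1) - 1) ≤ MhoSubgroup p G (i + 1) := by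
  rw [mho_eq, mho_eq]
  set O := Om (reg_pow hreg i) with hO
  have hidx : p ^ 2 ≤ (frattini G ⊔ O).index := by
    by_contra! hlt
    obtain ⟨x, hx⟩ := exists_gen hp hpg O hlt
    obtain ⟨j, hij, hj2⟩ := hj
    obtain ⟨j, rfl⟩ : ∃ k, j = k + 1 := ⟨j - 1, by omega⟩
    have h1 := relIndex_omega hp hpg (j + 1)
    rw [omega_eq hreg, omega_eq hreg, Nat.add_sub_cancel] at h1
    have h2 : (Om (reg_pow hreg j)).relIndex (Om (reg_pow hreg (j + 1))) ≤ p := by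
      apply relIndex_le hp _ _ x
      · rw [eq_top_iff, ← hx]
        exact sup_le_sup_left (Om_mono hreg (by omega)) _
      · intro y hy
        rw [mem_Om] at hy ⊢
        rw [← pow_mul, mul_comm, ← pow_succ, hy]
    rw [h1] at h2
    have h3 : p ^ omegaInv p G (j + 1) ≤ p ^ 1 := by simpa using h2
    rw [Nat.pow_le_pow_iff_right hp.one_lt] at h3
    omega
  have hcA : Nat.card (MhoOne (p ^ i) (⊤ : Subgroup G)) = O.index := by
    rw [card_mho (reg_pow hreg i), relIndex_top_right]
  apply chain hp hpg _ _ (MhoOne (p ^ i) (frattini G))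
  · rw [hcA, card_mho (reg_pow hreg (i + 1)), relIndex_top_right, ← relIndex_omega hp hpg,
      omega_eq hreg, omega_eq hreg, Nat.add_sub_cancel]
    exact (relIndex_mul_index (Om_mono hreg (by omega))).symm
  · rw [hcA, card_mho (reg_pow hreg i), ← relIndex_mul_index (le_sup_right : O ≤ frattini G ⊔ O),
      relIndex_sup_right, mul_comm]
    exact Nat.mul_le_mul_left _ hidx
  · apply (closure_le _).2
    rintro _ ⟨x, -, rfl⟩
    rw [pow_succ, mul_comm, pow_mul]
    exact pow_mem_mho _ (pow_mem_frattini hpg x)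
  · rw [commutator_le]
    intro g hg y hy
    obtain ⟨t, ht, rfl⟩ := (mem_mho (reg_pow hreg i)).1 hg
    exact mho_mono _ comm_le_frattini (comm_pow_mem (reg_pow hreg i) (mem_top t) (mem_top y))

end RegAux

/-- Let `P` be a finite regular `p`-group with `ω_1(P) ≥ 2` and
`μ_1(P) = μ_2(P) ≥ 2`.  Then for every `1 ≤ i ≤ μ_1(P) - 1`, the left-normed iterated
commutator `[℧_i(P), P, ..., P]` with `P` repeated `ω_{i+1}(P) - 1` times is contained
in `℧_{i+1}(P)`. -/
theorem iterated_commutator_of_mho_le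
    (p : ℕ) (hp : p.Prime) (P : Type) [Group P] [Finite P]
    (hpgrp : IsPGroup p P)
    (hreg : IsRegularPGroup p P)
    (hω : 2 ≤ omegaInv p P 1)
    (hμeq : muInv p P 1 = muInv p P 2)
    (hμ2 : 2 ≤ muInv p P 1)
    (i : ℕ) (hi1 : 1 ≤ i) (hi2 : i ≤ muInv p P 1 - 1) :
    iterCommutator (MhoSubgroup p P i) (omegaInv p P (i + 1) - 1) ≤ MhoSubgroup p P (i + 1) := by
  have := Fact.mk hp
  have hnil : Group.IsNilpotent P := hpgrp.isNilpotent
  apply RegAux.main hp hpgrp hreg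
  by_contra! hcon
  have hle : muInv p P 2 ≤ i := by
    unfold muInv
    have h1 : Nat.card {j : ℕ // 1 ≤ j ∧ 2 ≤ omegaInv p P j} ≤ Nat.card (Finset.Icc 1 i) := by
      refine Nat.card_le_card_of_injective (fun a => ⟨a.1, ?_⟩) ?_
      · rw [Finset.mem_Icc]
        refine ⟨a.2.1, ?_⟩
        by_contra! h
        exact absurd a.2.2 (not_le.2 (hcon a.1 h))
      · intro a b hab
        exact Subtype.ext (Subtype.mk.inj hab)
    rw [Nat.card_eq_finsetCard, Nat.card_Icc] at h1
    omega
  omega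
end

section
/- Let p be a prime and f a positive integer with p ≥ f + 1, let A be an elementary abelian p-group of order p^{f+1} with basis (x_1, ..., x_{f+1}), and let α be the automorphism of A fixing x_{f+1} and sending x_i to x_i x_{i+1} for 1 ≤ i ≤ f. Let n ≥ f + 2, let g generate a cyclic group of order p^{n-f}, and let P = A ⋊ ⟨g⟩ be the semidirect product in which g acts on A by α. Then for every a ∈ A and every integer k, (g^k a)^{p^2} = g^{k p^2}. -/
theorem aux_comm {A C : Type} [CommGroup A] [CommGroup C] (φ : C →* MulAut A) (b : A) (d : C)
    (h : φ d = 1) :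
    Commute (SemidirectProduct.inl b : A ⋊[φ] C) (SemidirectProduct.inr d) := by
  show _ * _ = _ * _
  ext <;> simp [h]

theorem aux_alpha_pow (p f : ℕ) (hp : p.Prime) (hpf : f + 1 ≤ p)
    (A : Type) [CommGroup A] (hexp : ∀ a : A, a ^ p = 1)
    (x : Fin (f + 1) → A) (hgen : Subgroup.closure (Set.range x) = ⊤)
    (α : MulAut A)
    (hfix : α (x (Fin.last f)) = x (Fin.last f))
    (hstep : ∀ i : Fin f, α (x i.castSucc) = x i.castSucc * x i.succ) :
    α ^ p = 1 := by
  let S : AddMonoid.End (Additive A) := MonoidHom.toAdditive α.toMonoidHom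
  have hS : ∀ a : A, S (Additive.ofMul a) = Additive.ofMul (α a) := fun a => rfl
  have hmul : ∀ (U V : AddMonoid.End (Additive A)) (b : Additive A), (U * V) b = U (V b) :=
    fun _ _ _ => rfl
  have hadd : ∀ (U V : AddMonoid.End (Additive A)) (b : Additive A), (U + V) b = U b + V b :=
    fun _ _ _ => rfl
  have hSpow : ∀ (m : ℕ) (a : A), (S ^ m) (Additive.ofMul a) = Additive.ofMul ((α ^ m) a) := by
    intro m
    induction m with
    | zero => intro a; rfl
    | succ m ih =>
      intro a
      rw [pow_succ, pow_succ, hmul, hS, ih, MulAut.mul_apply]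
  let T : AddMonoid.End (Additive A) := S - 1
  have hT : ∀ a : A, T (Additive.ofMul a) = Additive.ofMul (α a) - Additive.ofMul a :=
    fun a => rfl
  have hnil : ∀ (m : ℕ) (i : Fin (f + 1)), f + 1 ≤ i.val + m →
      (T ^ m) (Additive.ofMul (x i)) = 0 := by
    intro m
    induction m with
    | zero => intro i hi; have := i.isLt; omega
    | succ m ih =>
      intro i hi
      rw [pow_succ, hmul, hT]
      induction i using Fin.lastCases with
      | last => rw [hfix, sub_self, map_zero]
      | cast i =>
        rw [hstep, ofMul_mul, add_sub_cancel_left]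
        apply ih
        simp at hi ⊢
        omega
  have hST : S = 1 + T := by simp [T]
  obtain ⟨r, hr⟩ := Commute.exists_add_pow_prime_eq hp (Commute.one_left T)
  have key : ∀ i, (α ^ p) (x i) = x i := by
    intro i
    apply Additive.ofMul.injective
    rw [← hSpow, hST, hr]
    have h1 : (T ^ p) (Additive.ofMul (x i)) = 0 := hnil p i (by omega)
    have h2 : ∀ (U : AddMonoid.End (Additive A)) (b : Additive A),
        ((p : AddMonoid.End (Additive A)) * U) b = 0 := by
      intro U b
      rw [← nsmul_eq_mul]
      exact hexp (Additive.toMul (U b))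
    rw [mul_assoc, mul_assoc, one_pow, hadd, hadd, h1, h2, add_zero, add_zero]
    rfl
  have : (α ^ p : MulAut A).toMonoidHom = MonoidHom.id A := by
    apply MonoidHom.eq_of_eqOn_dense hgen
    rintro _ ⟨i, rfl⟩
    exact key i
  ext a
  exact DFunLike.congr_fun this a


/-- A tuple `(g 0, ..., g (r-1))` of non-identity elements of `P` is a uniqueness basis
if every element of `P` is uniquely the ordered product `g 0 ^ k 0 * ... * g (r-1) ^ k (r-1)`
with `0 ≤ k i < orderOf (g i)`. -/
def IsUniquenessBasis {P : Type} [Group P] {r : ℕ} (g : Fin r → P) : Prop :=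
  (∀ i, g i ≠ 1) ∧
    ∀ x : P, ∃! k : (i : Fin r) → Fin (orderOf (g i)),
      x = (((List.finRange r).map fun i => g i ^ ((k i : ℕ))).prod)

/-- Let `p` be a prime and `f ≥ 1` with `p ≥ f + 1`.  Let `A` be an
elementary abelian `p`-group of order `p ^ (f+1)` with basis `(x_1, ..., x_{f+1})`, and let
`α` be the automorphism of `A` fixing `x_{f+1}` and sending `x_i ↦ x_i * x_{i+1}` for
`1 ≤ i ≤ f`.  Let `n ≥ f + 2`, let `g` generate a cyclic group of order `p ^ (n-f)`
(here `Multiplicative (ZMod (p^(n-f)))` with generator `ofAdd 1`), and let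
`P = A ⋊ ⟨g⟩` be the semidirect product in which `g` acts by `α`.  Then for every
`a ∈ A` and `k : ℤ`, `(g^k * a) ^ (p^2) = g ^ (k * p^2)`. -/
theorem semidirect_power_p_squared
    (p f n : ℕ) (hp : p.Prime) (hf : 1 ≤ f) (hpf : f + 1 ≤ p) (hn : f + 2 ≤ n)
    (A : Type) [CommGroup A] [Finite A]
    (hcard : Nat.card A = p ^ (f + 1))
    (x : Fin (f + 1) → A)
    (hords : ∀ i, orderOf (x i) = p)
    (hbasis : IsUniquenessBasis x)
    (α : MulAut A)
    (hfix : α (x (Fin.last f)) = x (Fin.last f))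
    (hstep : ∀ i : Fin f, α (x i.castSucc) = x i.castSucc * x i.succ)
    (φ : Multiplicative (ZMod (p ^ (n - f))) →* MulAut A)
    (hφ : φ (Multiplicative.ofAdd 1) = α)
    (a : A) (k : ℤ) :
    ((SemidirectProduct.inr (Multiplicative.ofAdd (1 : ZMod (p ^ (n - f)))) :
          A ⋊[φ] Multiplicative (ZMod (p ^ (n - f)))) ^ k *
        SemidirectProduct.inl a) ^ (p ^ 2) =
      (SemidirectProduct.inr (Multiplicative.ofAdd (1 : ZMod (p ^ (n - f)))) :
          A ⋊[φ] Multiplicative (ZMod (p ^ (n - f)))) ^ (k * (p : ℤ) ^ 2) := by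
  have hgen : Subgroup.closure (Set.range x) = ⊤ := by
    rw [eq_top_iff]
    intro y _
    obtain ⟨c, hc, -⟩ := hbasis.2 y
    rw [hc]
    apply Subgroup.list_prod_mem
    intro z hz
    simp only [List.mem_map] at hz
    obtain ⟨i, -, rfl⟩ := hz
    exact Subgroup.pow_mem _ (Subgroup.subset_closure (Set.mem_range_self i)) _
  have hexp : ∀ b : A, b ^ p = 1 := by
    intro b
    have : powMonoidHom p = (1 : A →* A) := by
      apply MonoidHom.eq_of_eqOn_dense hgen
      rintro _ ⟨i, rfl⟩
      have := pow_orderOf_eq_one (x i)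
      rw [hords] at this
      exact this
    exact DFunLike.congr_fun this b
  have hα : α ^ p = 1 := aux_alpha_pow p f hp hpf A hexp x hgen α hfix hstep
  set c : Multiplicative (ZMod (p ^ (n - f))) := Multiplicative.ofAdd 1 with hc
  have hker : φ ((c ^ k) ^ p) = 1 := by
    rw [map_pow, map_zpow, hφ, ← zpow_natCast, ← zpow_mul, mul_comm, zpow_mul, zpow_natCast,
      hα, one_zpow]
  set G := A ⋊[φ] Multiplicative (ZMod (p ^ (n - f)))
  set u : G := SemidirectProduct.inr c ^ k * SemidirectProduct.inl a with hu
  have hright : (u ^ p).right = (c ^ k) ^ p := by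
    have : SemidirectProduct.rightHom (u ^ p) = (c ^ k) ^ p := by
      rw [hu, map_pow, map_mul, map_zpow]; simp
    exact this
  have h1 : u ^ p = SemidirectProduct.inl (u ^ p).left * SemidirectProduct.inr ((c ^ k) ^ p) := by
    conv_lhs => rw [← SemidirectProduct.inl_left_mul_inr_right (u ^ p)]
    rw [hright]
  have hcomm : Commute (SemidirectProduct.inl (u ^ p).left : G)
      (SemidirectProduct.inr ((c ^ k) ^ p)) := aux_comm φ _ _ hker
  rw [sq, pow_mul, h1, hcomm.mul_pow, ← map_pow, hexp, map_one, one_mul, ← map_pow, ← pow_mul,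
    map_pow, map_zpow, ← zpow_natCast, ← zpow_mul]
  push_cast
  ring_nf
end

section
/- Let p be a prime and f a positive integer with p ≥ f + 1. Then for every integer n ≥ f + 2 there exists a finite p-group of order p^n with coexponent f whose nilpotency class is exactly f + 1. -/
open scoped commutatorElement

theorem end_mul_apply' {A : Type} [AddCommGroup A] (g h : AddMonoid.End A) (a : A) :
    (g * h) a = g (h a) := rfl

theorem end_pow_succ_apply {A : Type} [AddCommGroup A] (g : AddMonoid.End A) (j : ℕ) (a : A) :
    (g ^ (j + 1)) a = g ((g ^ j) a) := by rw [pow_succ']; rfl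

structure SG (A : Type) [AddCommGroup A] (u : (AddMonoid.End A)ˣ) where
  l : A
  r : Subgroup.zpowers u

namespace SG

variable {A : Type} [AddCommGroup A] {u : (AddMonoid.End A)ˣ}

theorem ext' {x y : SG A u} (h1 : x.l = y.l) (h2 : x.r = y.r) : x = y := by
  cases x; cases y; simp_all

instance : Mul (SG A u) := ⟨fun x y => ⟨x.l + x.r • y.l, x.r * y.r⟩⟩
instance : One (SG A u) := ⟨⟨0, 1⟩⟩
instance : Inv (SG A u) := ⟨fun x => ⟨-(x.r⁻¹ • x.l), x.r⁻¹⟩⟩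

theorem mul_l (x y : SG A u) : (x * y).l = x.l + x.r • y.l := rfl
theorem mul_r (x y : SG A u) : (x * y).r = x.r * y.r := rfl
theorem one_l : (1 : SG A u).l = 0 := rfl
theorem one_r : (1 : SG A u).r = 1 := rfl
theorem inv_l (x : SG A u) : (x⁻¹).l = -(x.r⁻¹ • x.l) := rfl
theorem inv_r (x : SG A u) : (x⁻¹).r = x.r⁻¹ := rfl

instance : Group (SG A u) := Group.ofLeftAxioms
  (fun x y z => ext' (by simp only [mul_l, mul_r, smul_add, mul_smul, add_assoc])
    (by simp only [mul_r, mul_assoc]))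
  (fun x => ext' (by simp only [mul_l, one_l, one_r, one_smul, zero_add])
    (by simp only [mul_r, one_r, one_mul]))
  (fun x => ext' (by simp only [mul_l, inv_l, inv_r, one_l, neg_add_cancel])
    (by simp only [mul_r, inv_r, one_r, inv_mul_cancel]))

def equivProd : SG A u ≃ A × Subgroup.zpowers u where
  toFun x := (x.l, x.r)
  invFun x := ⟨x.1, x.2⟩
  left_inv _ := rfl
  right_inv _ := rfl

theorem r_comm (s t : Subgroup.zpowers u) : s * t = t * s := by
  obtain ⟨s, i, rfl⟩ := s
  obtain ⟨t, j, rfl⟩ := t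
  exact Subtype.ext (zpow_mul_comm u i j)

theorem comm_r (x y : SG A u) : (⁅x, y⁆).r = 1 := by
  simp only [commutatorElement_def, mul_r, inv_r]
  rw [r_comm x.r y.r, mul_inv_cancel_right, mul_inv_cancel]

theorem comm_l (x y : SG A u) :
    (⁅x, y⁆).l = (x.r • y.l - y.l) - (y.r • x.l - x.l) := by
  have h : ⁅x, y⁆ * (y * x) = x * y := by simp [commutatorElement_def]
  have h2 := congrArg SG.l h
  rw [mul_l, mul_l, mul_l, comm_r, one_smul] at h2
  rw [eq_sub_of_add_eq h2]
  abel

theorem pow_r (x : SG A u) (k : ℕ) : (x ^ k).r = x.r ^ k := by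
  induction k with
  | zero => rfl
  | succ k ih => rw [pow_succ, pow_succ, mul_r, ih]

theorem pow_l (x : SG A u) (k : ℕ) :
    (x ^ k).l = ∑ i ∈ Finset.range k, x.r ^ i • x.l := by
  induction k with
  | zero => rfl
  | succ k ih => rw [pow_succ, mul_l, ih, pow_r, Finset.sum_range_succ]

theorem pow_l_one (x : SG A u) (hx : x.r = 1) (k : ℕ) : (x ^ k).l = k • x.l := by
  rw [pow_l, hx]; simp

end SG

theorem abstract_group (A : Type) [AddCommGroup A] [Finite A] (N : AddMonoid.End A)
    (p f k : ℕ) (hp : p.Prime) (hf : 1 ≤ f) (hpf : f + 1 ≤ p)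
    (hpN : ∀ a, p • N a = 0) (hN : ∀ a, (N ^ (f + 1)) a = 0) (a₀ : A) (hN0 : (N ^ f) a₀ ≠ 0)
    (hexp : ∀ a : A, p ^ (k + 2) • a = 0) (hexp0 : p ^ (k + 1) • a₀ ≠ 0) :
    ∃ (P : Type) (inst : Group P),
      letI := inst
      Finite P ∧
      Nat.card P = Nat.card A * p ∧
      Monoid.exponent P = p ^ (k + 2) ∧
      (⊤ : Subgroup P).lowerCentralSeries (f + 1) = ⊥ ∧
      (⊤ : Subgroup P).lowerCentralSeries f ≠ ⊥ := by
  have : Fact p.Prime := ⟨hp⟩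
  have hpN' : (p : AddMonoid.End A) * N = 0 := by
    ext a
    simpa using hpN a
  have hNf : N ^ (f + 1) = 0 := by
    ext a
    simpa using hN a
  have hNp : N ^ p = 0 := pow_eq_zero_of_le hpf hNf
  have hS : (1 + N) ^ p = 1 := by
    obtain ⟨r, hr⟩ := (Commute.one_left N).exists_add_pow_prime_eq hp
    rw [hr, hNp, mul_one, hpN']
    simp
  obtain ⟨u, hu⟩ : ∃ u : (AddMonoid.End A)ˣ, (u : AddMonoid.End A) = 1 + N :=
    (IsUnit.of_pow_eq_one hS hp.ne_zero)
  have hup : u ^ p = 1 := by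
    ext1
    rw [Units.val_pow_eq_pow_val, hu, hS]; rfl
  have hu1 : u ≠ 1 := by
    rintro rfl
    have : N = 0 := by simpa using hu
    apply hN0
    rw [this, zero_pow (by omega)]; rfl
  have hord : orderOf u = p := orderOf_eq_prime hup hu1
  have hcardu : Nat.card (Subgroup.zpowers u) = p := by rw [Nat.card_zpowers, hord]
  have : Finite (Subgroup.zpowers u) := Nat.finite_of_card_ne_zero (by rw [hcardu]; exact hp.ne_zero)
  -- difference lemma
  have key : ∀ s : Subgroup.zpowers u, ∃ c : AddMonoid.End A, Commute N c ∧
      ∀ a : A, s • a - a = N (c a) := by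
    rintro ⟨s, hs⟩
    have hfo : IsOfFinOrder u := isOfFinOrder_iff_pow_eq_one.2 ⟨p, hp.pos, hup⟩
    obtain ⟨j, rfl⟩ := (hfo.mem_powers_iff_mem_zpowers).2 hs
    refine ⟨∑ i ∈ Finset.range j, (1 + N) ^ i, ?_, ?_⟩
    · exact Commute.sum_right _ _ _ fun i _ => ((Commute.one_right N).add_right (Commute.refl N)).pow_right i
    · intro a
      have h := mul_geom_sum (1 + N) j
      rw [add_sub_cancel_left] at h
      have h2 := congrArg (fun g : AddMonoid.End A => g a) h
      simp only [end_mul_apply'] at h2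
      rw [h2]
      change ((u ^ j : (AddMonoid.End A)ˣ) : AddMonoid.End A) a - a = _
      rw [Units.val_pow_eq_pow_val, hu]; rfl
  have hps : ∀ (s : Subgroup.zpowers u) (a : A), p • (s • a) = p • a := by
    intro s a
    obtain ⟨c, -, hc⟩ := key s
    rw [← sub_eq_zero, ← smul_sub, hc, hpN]
  have hN_lcs : ∀ j, ∀ x ∈ (⊤ : Subgroup (SG A u)).lowerCentralSeries (j + 1),
      x.r = 1 ∧ ∃ a, x.l = (N ^ (j + 1)) a := by
    let H : ℕ → Subgroup (SG A u) := fun j =>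
      { carrier := {x | x.r = 1 ∧ ∃ a, x.l = (N ^ j) a}
        one_mem' := ⟨rfl, 0, by rw [map_zero]; rfl⟩
        mul_mem' := by
          rintro x y ⟨hx, a, ha⟩ ⟨hy, b, hb⟩
          refine ⟨by rw [SG.mul_r, hx, hy, one_mul], a + b, ?_⟩
          rw [SG.mul_l, hx, one_smul, ha, hb, map_add]
        inv_mem' := by
          rintro x ⟨hx, a, ha⟩
          refine ⟨by rw [SG.inv_r, hx, inv_one], -a, ?_⟩
          rw [SG.inv_l, hx, inv_one, one_smul, ha, map_neg] }
    have : ∀ j, (⊤ : Subgroup (SG A u)).lowerCentralSeries (j + 1) ≤ H (j + 1) := by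
      intro j
      induction j with
      | zero =>
        rw [Subgroup.lowerCentralSeries_succ, Subgroup.commutator_le]
        rintro x - y -
        obtain ⟨c, -, hc⟩ := key x.r
        obtain ⟨d, -, hd⟩ := key y.r
        refine ⟨SG.comm_r x y, c y.l - d x.l, ?_⟩
        rw [SG.comm_l, hc, hd, zero_add, pow_one, map_sub]
      | succ j ih =>
        rw [Subgroup.lowerCentralSeries_succ, Subgroup.commutator_le]
        rintro x hx y -
        obtain ⟨hx, a, ha⟩ := ih hx
        obtain ⟨d, hdc, hd⟩ := key y.r
        refine ⟨SG.comm_r x y, -(d a), ?_⟩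
        rw [SG.comm_l, hx, one_smul, sub_self, zero_sub, hd, ha, map_neg, pow_succ' N (j + 1)]
        have h := congrArg (fun g : AddMonoid.End A => g a) ((hdc.pow_left (j + 1)).eq)
        simp only [end_mul_apply'] at h ⊢
        rw [h]
    exact fun j x hx => this j hx
  have hlow : ∀ j, (⟨(N ^ j) a₀, 1⟩ : SG A u) ∈ (⊤ : Subgroup (SG A u)).lowerCentralSeries j := by
    intro j
    induction j with
    | zero => exact Subgroup.mem_top _
    | succ j ih =>
      rw [Subgroup.lowerCentralSeries_succ]
      have h := Subgroup.commutator_mem_commutator ih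
        (Subgroup.mem_top (⟨0, ⟨u, Subgroup.mem_zpowers u⟩⟩ : SG A u))
      have h' := inv_mem h
      convert h' using 1
      refine SG.ext' ?_ ?_
      · rw [SG.inv_l, SG.comm_r, SG.comm_l]
        simp only [inv_one, one_smul, sub_self, zero_sub, neg_neg]
        change _ = (u : AddMonoid.End A) ((N ^ j) a₀) - (N ^ j) a₀
        rw [hu, end_pow_succ_apply]
        exact (add_sub_cancel_left ((N ^ j) a₀) (N ((N ^ j) a₀))).symm
      · rw [SG.inv_r, SG.comm_r, inv_one]
  refine ⟨SG A u, inferInstance, Finite.of_equiv _ SG.equivProd.symm, ?_, ?_, ?_, ?_⟩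
  · rw [Nat.card_congr SG.equivProd, Nat.card_prod, hcardu]
  · apply Nat.dvd_antisymm
    · apply Monoid.exponent_dvd_of_forall_pow_eq_one
      intro g
      have hgp : (g ^ p).r = 1 := by
        rw [SG.pow_r, ← hcardu, pow_card_eq_one']
      have e1 : p ^ (k + 2) = p * p ^ (k + 1) := by ring
      rw [e1, pow_mul]
      refine SG.ext' ?_ ?_
      · rw [SG.pow_l_one _ hgp, SG.pow_l, pow_succ p k, mul_smul, Finset.smul_sum]
        simp only [hps, Finset.sum_const, Finset.card_range]
        rw [← mul_smul, ← mul_smul, mul_assoc, ← pow_two, ← pow_add, hexp]; rfl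
      · rw [SG.pow_r, hgp, one_pow]; rfl
    · have : orderOf (⟨a₀, 1⟩ : SG A u) = p ^ (k + 1 + 1) := by
        apply orderOf_eq_prime_pow
        · intro h
          have := congrArg SG.l h
          rw [SG.pow_l_one _ rfl] at this
          exact hexp0 this
        · refine SG.ext' ?_ ?_
          · rw [SG.pow_l_one _ rfl]; exact hexp a₀
          · rw [SG.pow_r, one_pow]; rfl
      rw [← this]
      exact Monoid.order_dvd_exponent _
  · rw [eq_bot_iff]
    intro x hx
    obtain ⟨h1, a, ha⟩ := hN_lcs f x hx
    rw [hN] at ha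
    exact Subgroup.mem_bot.2 (SG.ext' ha h1)
  · intro h
    have h1 := hlow f
    rw [h, Subgroup.mem_bot] at h1
    exact hN0 (congrArg SG.l h1)

section concrete
variable (p m k : ℕ)

abbrev AA := ZMod (p ^ (k + 2)) × (Fin m → ZMod p)

def up : ZMod p →+ ZMod (p ^ (k + 2)) :=
  ZMod.lift p ⟨AddMonoidHom.mulLeft ((p : ZMod (p ^ (k + 2))) ^ (k + 1)) |>.comp
    (Int.castAddHom _), by
      have : ((p ^ (k + 2) : ℕ) : ZMod (p ^ (k + 2))) = 0 := ZMod.natCast_self _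
      push_cast at this
      simp [← pow_succ, this]⟩

def dn : ZMod (p ^ (k + 2)) →+* ZMod p := ZMod.castHom (Dvd.intro_left (p ^ (k + 1)) rfl) _

theorem up_one : up p k 1 = (p : ZMod (p ^ (k + 2))) ^ (k + 1) := by
  have : (1 : ZMod p) = ((1 : ℤ) : ZMod p) := by simp
  rw [this, up, ZMod.lift_coe]
  simp

theorem dn_up (x : ZMod p) : dn p k (up p k x) = 0 := by
  obtain ⟨x, rfl⟩ := ZMod.intCast_surjective x
  rw [up, ZMod.lift_coe]
  simp

def ww (a : AA p m k) : Fin (m + 1) → ZMod p := Fin.cons (dn p k a.1) a.2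

theorem ww_add (a b : AA p m k) : ww p m k (a + b) = ww p m k a + ww p m k b := by
  funext i
  refine Fin.cases ?_ (fun j => ?_) i <;> simp [ww]

theorem ww_zero : ww p m k 0 = 0 := by
  funext i
  refine Fin.cases ?_ (fun j => ?_) i <;> simp [ww]

def NN : AddMonoid.End (AA p m k) where
  toFun a := (up p k (ww p m k a (Fin.last m)), fun i => ww p m k a i.castSucc)
  map_zero' := by simp [ww_zero]; rfl
  map_add' a b := by ext <;> simp [ww_add]

theorem NN_fst (a : AA p m k) : (NN p m k a).1 = up p k (ww p m k a (Fin.last m)) := rfl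

theorem ww_NN_zero (a : AA p m k) : ww p m k (NN p m k a) 0 = 0 := dn_up p k _
theorem ww_NN_succ (a : AA p m k) (i : Fin m) :
    ww p m k (NN p m k a) i.succ = ww p m k a i.castSucc := rfl

theorem NN_eq_zero (a : AA p m k) (h : ww p m k a = 0) : NN p m k a = 0 := by
  refine Prod.ext ?_ ?_
  · rw [NN_fst, h]; simp
  · funext i
    change ww p m k a i.castSucc = 0
    rw [h]; rfl

theorem ww_NN_pow (a : AA p m k) (j : ℕ) : ∀ i : Fin (m + 1), (i : ℕ) < j →
    ww p m k ((NN p m k ^ j) a) i = 0 := by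
  induction j with
  | zero => intro i hi; omega
  | succ j ih =>
    intro i hi
    rw [end_pow_succ_apply]
    induction i using Fin.cases with
    | zero => exact ww_NN_zero p m k _
    | succ i =>
      rw [ww_NN_succ]
      apply ih
      simp at hi ⊢
      omega

theorem NN_pow (a : AA p m k) : (NN p m k ^ (m + 1 + 1)) a = 0 := by
  rw [end_pow_succ_apply]
  apply NN_eq_zero
  funext i
  exact ww_NN_pow p m k a (m + 1) i i.2

theorem ww_NN_pow_one (j : ℕ) (hj : j < m + 1) :
    ww p m k ((NN p m k ^ j) (1, 0)) ⟨j, hj⟩ = 1 := by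
  induction j with
  | zero => exact map_one (dn p k)
  | succ j ih =>
    rw [end_pow_succ_apply]
    exact (ww_NN_succ p m k _ ⟨j, by omega⟩).trans (ih (by omega))

theorem p_pow_ne (hp : p.Prime) : (p : ZMod (p ^ (k + 2))) ^ (k + 1) ≠ 0 := by
  intro h
  have h2 : ((p ^ (k + 1) : ℕ) : ZMod (p ^ (k + 2))) = 0 := by push_cast; exact h
  rw [ZMod.natCast_eq_zero_iff, Nat.pow_dvd_pow_iff_le_right hp.one_lt] at h2
  omega

end concrete

theorem exists_group_of_coexponent_with_class_succ
    (p f : ℕ) (hp : p.Prime) (hf : 1 ≤ f) (hpf : f + 1 ≤ p)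
    (n : ℕ) (hn : f + 2 ≤ n) :
    ∃ (P : Type) (inst : Group P),
      letI := inst
      Finite P ∧
      Nat.card P = p ^ n ∧
      (∃ e : ℕ, Monoid.exponent P = p ^ e ∧ n - e = f) ∧
      (⊤ : Subgroup P).lowerCentralSeries (f + 1) = ⊥ ∧
      (⊤ : Subgroup P).lowerCentralSeries f ≠ ⊥ := by
  obtain ⟨m, rfl⟩ : ∃ m, f = m + 1 := ⟨f - 1, by omega⟩
  obtain ⟨k, rfl⟩ : ∃ k, n = m + 1 + 2 + k := ⟨n - (m + 1 + 2), by omega⟩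
  have : NeZero p := ⟨hp.ne_zero⟩
  have : NeZero (p ^ (k + 2)) := ⟨pow_ne_zero _ hp.ne_zero⟩
  obtain ⟨P, inst, h1, h2, h3, h4, h5⟩ := abstract_group (AA p m k) (NN p m k) p (m + 1) k hp hf hpf
    (by
      intro a
      rw [← map_nsmul]
      apply NN_eq_zero
      funext i
      refine Fin.cases ?_ (fun j => ?_) i <;> simp [ww])
    (NN_pow p m k) (1, 0)
    (by
      intro h
      have h' := congrArg Prod.fst h
      rw [end_pow_succ_apply, NN_fst] at h'
      have h6 := ww_NN_pow_one p m k m (by omega)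
      change ww p m k ((NN p m k ^ m) (1, 0)) (Fin.last m) = 1 at h6
      rw [h6, up_one] at h'
      exact p_pow_ne p k hp h')
    (by
      intro a
      refine Prod.ext ?_ ?_
      · have : ((p ^ (k + 2) : ℕ) : ZMod (p ^ (k + 2))) = 0 := ZMod.natCast_self _
        rw [Prod.smul_fst, nsmul_eq_mul, this, zero_mul]; rfl
      · funext i
        simp [nsmul_eq_mul])
    (by
      intro h
      have h' := congrArg Prod.fst h
      rw [Prod.smul_fst, nsmul_eq_mul, mul_one, Nat.cast_pow] at h'
      exact p_pow_ne p k hp h')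
  refine ⟨P, inst, h1, ?_, ⟨k + 2, h3, by omega⟩, h4, h5⟩
  rw [h2, Nat.card_prod, Nat.card_fun]
  simp only [Nat.card_zmod, Nat.card_fin]
  ring
end

section
/- Fix an integer f ≥ 3. For every prime p with p > f + 1, the number of isomorphism classes of Lie rings of order p^n which are nilpotent of nilpotency class less than p and whose underlying abelian group has coexponent f is independent of n for n ≥ 3f; that is, for all n, n' ≥ 3f these counts are equal. -/
/-- The lower central series of a Lie ring, as additive subgroups:
`lieLCS L 0 = L` and `lieLCS L (k+1) = [lieLCS L k, L]`. -/
def lieLCS (L : Type) [LieRing L] : ℕ → AddSubgroup L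
  | 0 => ⊤
  | (k + 1) => AddSubgroup.closure {x : L | ∃ y ∈ lieLCS L k, ∃ z : L, x = ⁅y, z⁆}

/-- A Lie ring is nilpotent if its lower central series reaches `⊥`. -/
def IsNilpotentLieRing (L : Type) [LieRing L] : Prop :=
  ∃ c : ℕ, lieLCS L c = ⊥

/-- The nilpotency class of a Lie ring: the least `c` with `lieLCS L c = ⊥`. -/
noncomputable def lieNilClass (L : Type) [LieRing L] : ℕ :=
  sInf {c : ℕ | lieLCS L c = ⊥}

/-- The addition extracted from a Lie ring structure. -/
def addOfLieRing (G : Type) (s : LieRing G) : Add G := by letI := s; infer_instance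

/-- The bracket extracted from a Lie ring structure. -/
def bracketOfLieRing (G : Type) (s : LieRing G) : Bracket G G := by letI := s; infer_instance

/-- The number of isomorphism classes of Lie rings with `N` elements whose Lie ring
structure satisfies the predicate `Q`; isomorphisms are additive bijections preserving
the bracket. -/
noncomputable def lieClassCount (N : ℕ) (Q : LieRing (Fin N) → Prop) : ℕ :=
  Nat.card (Quot fun s t : {s : LieRing (Fin N) // Q s} =>
    ∃ e : @AddEquiv (Fin N) (Fin N) (addOfLieRing _ s.1) (addOfLieRing _ t.1),
      ∀ x y : Fin N,
        e (@Bracket.bracket _ _ (bracketOfLieRing _ s.1) x y) =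
          @Bracket.bracket _ _ (bracketOfLieRing _ t.1) (e x) (e y))

/-- The number of isomorphism classes of Lie rings of order `p ^ n` which are nilpotent of
nilpotency class less than `p` and whose underlying abelian group has coexponent `f`. -/
noncomputable def PsiLie (p n f : ℕ) : ℕ :=
  lieClassCount (p ^ n) fun s =>
    letI := s
    IsNilpotentLieRing (Fin (p ^ n)) ∧ lieNilClass (Fin (p ^ n)) < p ∧
      ∃ e : ℕ, AddMonoid.exponent (Fin (p ^ n)) = p ^ e ∧ n - e = f

namespace PsiAux

/-- One half of the comparison data between two abelian groups. -/
structure Half (q r r' : ℕ) {L L' : Type} [AddCommGroup L] [AddCommGroup L']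
    (S T : L → L' → Prop) : Prop where
  Ssub : ∀ {x y x' y'}, S x x' → S y y' → S (x - y) (x' - y')
  Tsub : ∀ {x y x' y'}, T x x' → T y y' → T (x - y) (x' - y')
  Sl : ∀ x, ∃ x', S x x'
  S0 : ∀ {x}, S x 0 → ∃ z, x = q • z
  Sq : ∀ z, S (q • z) 0
  Tl : ∀ {y}, q • y = 0 → ∃ y', T y y'
  Tq : ∀ {y y'}, T y y' → q • y = 0
  T0 : ∀ {y}, T y 0 → y = 0
  TS : ∀ {y y'}, T y y' → S y y'
  kap : ∀ {x x'}, S x x' → T (r • x) (r' • x')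

def ARel (q r r' : ℕ) {L L' : Type} [AddCommGroup L] [AddCommGroup L']
    (S T : L → L' → Prop) : Prop :=
  Half q r r' S T ∧ Half q r' r (flip S) (flip T)

def LRel (q r r' : ℕ) (L L' : Type) [LieRing L] [LieRing L'] : Prop :=
  ∃ S T : L → L' → Prop, ARel q r r' S T ∧
    ∀ {x y x' y'}, S x x' → S y y' → T ⁅x, y⁆ ⁅x', y'⁆

section half
variable {q r r' r'' : ℕ} {L L' L'' : Type} [AddCommGroup L] [AddCommGroup L'] [AddCommGroup L'']
  {S T : L → L' → Prop} {S' T' : L' → L'' → Prop}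

theorem Half.S00 (h : Half q r r' S T) : S 0 0 := by
  simpa using h.Sq 0

theorem Half.T00 (h : Half q r r' S T) : T 0 0 := by
  simpa using h.kap h.S00

theorem Half.Sadd (h : Half q r r' S T) {x y x' y'} (h1 : S x x') (h2 : S y y') :
    S (x + y) (x' + y') := by
  simpa using h.Ssub h1 (h.Ssub h.S00 h2)

theorem Half.Tadd (h : Half q r r' S T) {x y x' y'} (h1 : T x x') (h2 : T y y') :
    T (x + y) (x' + y') := by
  simpa using h.Tsub h1 (h.Tsub h.T00 h2)

theorem Half.Snsmul (h : Half q r r' S T) {x x'} (h1 : S x x') (n : ℕ) :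
    S (n • x) (n • x') := by
  induction n with
  | zero => simpa using h.S00
  | succ n ih => rw [succ_nsmul, succ_nsmul]; exact h.Sadd ih h1

theorem Half.Tnsmul (h : Half q r r' S T) {x x'} (h1 : T x x') (n : ℕ) :
    T (n • x) (n • x') := by
  induction n with
  | zero => simpa using h.T00
  | succ n ih => rw [succ_nsmul, succ_nsmul]; exact h.Tadd ih h1

theorem ARel.symm (h : ARel q r r' S T) : ARel q r' r (flip S) (flip T) := ⟨h.2, h.1⟩

theorem ARel.Tuniq (h : ARel q r r' S T) {x x' y'} (h1 : T x x') (h2 : T x y') : x' = y' := by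
  have := h.1.Tsub h1 h2
  rw [sub_self] at this
  exact sub_eq_zero.1 (h.2.T0 this)

/-- Composition of relations. -/
def comp (S : L → L' → Prop) (S' : L' → L'' → Prop) (x : L) (z : L'') : Prop :=
  ∃ y, S x y ∧ S' y z

theorem Half.trans (h : ARel q r r' S T) (h' : ARel q r' r'' S' T') :
    Half q r r'' (comp S S') (comp T T') where
  Ssub := by
    rintro x y x' y' ⟨a, h1, h2⟩ ⟨b, h3, h4⟩
    exact ⟨a - b, h.1.Ssub h1 h3, h'.1.Ssub h2 h4⟩
  Tsub := by
    rintro x y x' y' ⟨a, h1, h2⟩ ⟨b, h3, h4⟩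
    exact ⟨a - b, h.1.Tsub h1 h3, h'.1.Tsub h2 h4⟩
  Sl x := by
    obtain ⟨y, hy⟩ := h.1.Sl x
    obtain ⟨z, hz⟩ := h'.1.Sl y
    exact ⟨z, y, hy, hz⟩
  S0 := by
    rintro x ⟨y, h1, h2⟩
    obtain ⟨z, rfl⟩ := h'.1.S0 h2
    have h3 : S 0 (q • z) := h.2.Sq z
    have := h.1.Ssub h1 h3
    simp only [sub_zero, sub_self] at this
    exact h.1.S0 this
  Sq z := ⟨0, h.1.Sq z, h'.1.S00⟩
  Tl := by
    intro y hy
    obtain ⟨z, hz⟩ := h.1.Tl hy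
    obtain ⟨w, hw⟩ := h'.1.Tl (h.2.Tq hz)
    exact ⟨w, z, hz, hw⟩
  Tq := by
    rintro y y' ⟨z, h1, h2⟩
    exact h.1.Tq h1
  T0 := by
    rintro y ⟨z, h1, h2⟩
    obtain rfl := h'.1.T0 h2
    exact h.1.T0 h1
  TS := by
    rintro y y' ⟨z, h1, h2⟩
    exact ⟨z, h.1.TS h1, h'.1.TS h2⟩
  kap := by
    rintro y y' ⟨z, h1, h2⟩
    exact ⟨_, h.1.kap h1, h'.1.kap h2⟩

theorem flip_comp : flip (comp S S') = comp (flip S') (flip S) := by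
  funext x y
  simp only [flip, comp, eq_iff_iff]
  exact exists_congr fun _ => and_comm

theorem ARel.trans (h : ARel q r r' S T) (h' : ARel q r' r'' S' T') :
    ARel q r r'' (comp S S') (comp T T') := by
  refine ⟨Half.trans h h', ?_⟩
  rw [flip_comp, flip_comp]
  exact Half.trans h'.symm h.symm

theorem ARel.congr_right (h : ARel q r r' S T) (g : L'' ≃+ L') :
    ARel q r r' (fun x y => S x (g y)) (fun x y => T x (g y)) := by
  obtain ⟨h1, h2⟩ := h
  constructor
  · constructor
    · intro x y x' y' a b; simpa using h1.Ssub a b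
    · intro x y x' y' a b; simpa using h1.Tsub a b
    · intro x
      obtain ⟨y, hy⟩ := h1.Sl x
      exact ⟨g.symm y, by simpa using hy⟩
    · intro x hx; exact h1.S0 (by simpa using hx)
    · intro z; simpa using h1.Sq z
    · intro x hx
      obtain ⟨y, hy⟩ := h1.Tl hx
      exact ⟨g.symm y, by simpa using hy⟩
    · intro x y h; exact h1.Tq h
    · intro y hy; exact h1.T0 (by simpa using hy)
    · intro x y h; exact h1.TS h
    · intro x y h; simpa using h1.kap h
  · constructor
    · intro x y x' y' a b
      simp only [flip, map_sub] at *
      exact h2.Ssub a b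
    · intro x y x' y' a b
      simp only [flip, map_sub] at *
      exact h2.Tsub a b
    · intro x; exact h2.Sl (g x)
    · intro x hx
      obtain ⟨z, hz⟩ := h2.S0 (x := g x) hx
      exact ⟨g.symm z, g.injective (by simpa using hz)⟩
    · intro z
      have := h2.Sq (g z)
      simp only [flip, map_nsmul] at *
      exact this
    · intro y hy
      exact h2.Tl (y := g y) (by rw [← map_nsmul, hy, map_zero])
    · intro x y h
      have := h2.Tq (y := g x) (y' := y) h
      exact g.injective (by simpa using this)
    · intro y hy
      have := h2.T0 (y := g y) hy
      exact g.injective (by simpa using this)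
    · intro x y h; exact h2.TS (y := g x) h
    · intro x y h
      have := h2.kap (x := g x) (x' := y) h
      simp only [flip, map_nsmul] at *
      exact this

end half

section lie
variable {q r r' r'' : ℕ} {L L' L'' : Type} [LieRing L] [LieRing L'] [LieRing L'']

theorem LRel.symm (h : LRel q r r' L L') : LRel q r' r L' L := by
  obtain ⟨S, T, h, hb⟩ := h
  exact ⟨flip S, flip T, h.symm, fun a b => hb a b⟩

theorem LRel.trans (h : LRel q r r' L L') (h' : LRel q r' r'' L' L'') : LRel q r r'' L L'' := by
  obtain ⟨S, T, h, hb⟩ := h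
  obtain ⟨S', T', h', hb'⟩ := h'
  refine ⟨_, _, h.trans h', ?_⟩
  rintro x y x' y' ⟨a, h1, h2⟩ ⟨b, h3, h4⟩
  exact ⟨_, hb h1 h3, hb' h2 h4⟩

theorem LRel.congr_right (h : LRel q r r' L L') (g : L'' ≃+ L')
    (hg : ∀ x y, g ⁅x, y⁆ = ⁅g x, g y⁆) : LRel q r r' L L'' := by
  obtain ⟨S, T, h, hb⟩ := h
  refine ⟨_, _, h.congr_right g, ?_⟩
  intro x y x' y' h1 h2
  simp only [hg]
  exact hb h1 h2

theorem LRel.lcs_aux (hS : ∃ S T : L → L' → Prop, ARel q r r' S T ∧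
    ∀ {x y x' y'}, S x x' → S y y' → T ⁅x, y⁆ ⁅x', y'⁆) (c : ℕ)
    (hc : lieLCS L' (c + 1) = ⊥) : lieLCS L (c + 1) = ⊥ := by
  obtain ⟨S, T, h, hb⟩ := hS
  have key : ∀ c, ∀ x ∈ lieLCS L (c + 1), ∃ x' ∈ lieLCS L' (c + 1), T x x' := by
    intro c
    induction c with
    | zero =>
      intro x hx
      rw [lieLCS] at hx
      induction hx using AddSubgroup.closure_induction with
      | mem x hx =>
        obtain ⟨y, -, z, rfl⟩ := hx
        obtain ⟨y', hy'⟩ := h.1.Sl y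
        obtain ⟨z', hz'⟩ := h.1.Sl z
        refine ⟨⁅y', z'⁆, ?_, hb hy' hz'⟩
        rw [lieLCS]
        exact AddSubgroup.subset_closure ⟨y', by simp [lieLCS], z', rfl⟩
      | zero => exact ⟨0, zero_mem _, h.1.T00⟩
      | add x y _ _ hx hy =>
        obtain ⟨x', h1, h2⟩ := hx
        obtain ⟨y', h3, h4⟩ := hy
        exact ⟨x' + y', add_mem h1 h3, h.1.Tadd h2 h4⟩
      | neg x _ hx =>
        obtain ⟨x', h1, h2⟩ := hx
        exact ⟨-x', neg_mem h1, by simpa using h.1.Tsub h.1.T00 h2⟩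
    | succ c ih =>
      intro x hx
      rw [lieLCS] at hx
      induction hx using AddSubgroup.closure_induction with
      | mem x hx =>
        obtain ⟨y, hy, z, rfl⟩ := hx
        obtain ⟨y', hy1, hy'⟩ := ih y hy
        obtain ⟨z', hz'⟩ := h.1.Sl z
        refine ⟨⁅y', z'⁆, ?_, hb (h.1.TS hy') hz'⟩
        rw [lieLCS]
        exact AddSubgroup.subset_closure ⟨y', hy1, z', rfl⟩
      | zero => exact ⟨0, zero_mem _, h.1.T00⟩
      | add x y _ _ hx hy =>
        obtain ⟨x', h1, h2⟩ := hx
        obtain ⟨y', h3, h4⟩ := hy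
        exact ⟨x' + y', add_mem h1 h3, h.1.Tadd h2 h4⟩
      | neg x _ hx =>
        obtain ⟨x', h1, h2⟩ := hx
        exact ⟨-x', neg_mem h1, by simpa using h.1.Tsub h.1.T00 h2⟩
  rw [eq_bot_iff]
  intro x hx
  obtain ⟨x', h1, h2⟩ := key c x hx
  rw [hc, AddSubgroup.mem_bot] at h1
  subst h1
  exact h.1.T0 h2

theorem lcs_zero_ne [Nontrivial L] : lieLCS L 0 ≠ ⊥ := by
  rw [lieLCS]
  exact top_ne_bot

theorem LRel.lcs [Nontrivial L] [Nontrivial L'] (h : LRel q r r' L L') (c : ℕ) :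
    lieLCS L c = ⊥ ↔ lieLCS L' c = ⊥ := by
  cases c with
  | zero => exact iff_of_false lcs_zero_ne lcs_zero_ne
  | succ c => exact ⟨LRel.lcs_aux h.symm c, LRel.lcs_aux h c⟩

theorem LRel.nilp [Nontrivial L] [Nontrivial L'] (h : LRel q r r' L L') :
    IsNilpotentLieRing L ↔ IsNilpotentLieRing L' := exists_congr fun c => h.lcs c

theorem LRel.cls [Nontrivial L] [Nontrivial L'] (h : LRel q r r' L L') :
    lieNilClass L = lieNilClass L' := by
  unfold lieNilClass
  congr 1
  ext c
  exact h.lcs c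

end lie

/-- Build the bracket. -/
theorem construct {q r r' : ℕ} {L : Type} [LieRing L] {L' : Type} [I : AddCommGroup L']
    {S T : L → L' → Prop} (h : ARel q r r' S T) (hq : ∀ x y : L, q • ⁅x, y⁆ = 0) :
    ∃ s : LieRing L', s.toAddCommGroup = I ∧ LRel q r r' L L' := by
  choose lf hlf using fun x' => h.2.Sl x'
  choose tt htt using fun y hy => h.1.Tl (y := y) hy
  let br : L' → L' → L' := fun x y => tt ⁅lf x, lf y⁆ (hq _ _)
  have hl : ∀ {x y x'}, S x x' → S y x' → ∃ z, x = y + q • z := by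
    intro x y x' h1 h2
    have := h.1.Ssub h1 h2
    rw [sub_self] at this
    obtain ⟨z, hz⟩ := h.1.S0 this
    exact ⟨z, by rw [← hz]; abel⟩
  have hbr : ∀ {x y x' y'}, S x x' → S y y' → T ⁅x, y⁆ (br x' y') := by
    intro x y x' y' h1 h2
    obtain ⟨z, rfl⟩ := hl h1 (hlf x')
    obtain ⟨w, rfl⟩ := hl h2 (hlf y')
    have : ⁅lf x' + q • z, lf y' + q • w⁆ = ⁅lf x', lf y'⁆ := by
      simp [lie_add, add_lie, hq]
    rw [this]
    exact htt _ _
  have hu : ∀ {x x' y'}, T x x' → T x y' → x' = y' := fun a b => h.Tuniq a b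
  let s : LieRing L' :=
    { I with
      bracket := br
      add_lie := fun x y z => hu (hbr (h.1.Sadd (hlf x) (hlf y)) (hlf z)) (by
        rw [add_lie]
        exact h.1.Tadd (hbr (hlf x) (hlf z)) (hbr (hlf y) (hlf z)))
      lie_add := fun x y z => hu (hbr (hlf x) (h.1.Sadd (hlf y) (hlf z))) (by
        rw [lie_add]
        exact h.1.Tadd (hbr (hlf x) (hlf y)) (hbr (hlf x) (hlf z)))
      lie_self := fun x => hu (hbr (hlf x) (hlf x)) (by rw [lie_self]; exact h.1.T00)
      leibniz_lie := fun x y z => hu (hbr (hlf x) (h.1.TS (hbr (hlf y) (hlf z)))) (by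
        rw [leibniz_lie]
        exact h.1.Tadd (hbr (h.1.TS (hbr (hlf x) (hlf y))) (hlf z))
          (hbr (hlf y) (h.1.TS (hbr (hlf x) (hlf z))))) }
  exact ⟨s, rfl, S, T, h, hbr⟩

section concrete
variable {q r r' : ℕ} {G G' A : Type} [AddCommGroup G] [AddCommGroup G'] [AddCommGroup A]

def CS (q m m' : ℕ) (ε : G ≃+ ZMod m × A) (ε' : G' ≃+ ZMod m' × A) (x : G) (x' : G') : Prop :=
  ∃ k k' : ℤ, (ε x).1 = k ∧ (ε' x').1 = k' ∧ (q : ℤ) ∣ k - k' ∧ (ε x).2 = (ε' x').2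

def CT (r r' m m' : ℕ) (ε : G ≃+ ZMod m × A) (ε' : G' ≃+ ZMod m' × A) (x : G) (x' : G') : Prop :=
  ∃ k : ℤ, (ε x).1 = ((r * k : ℤ) : ZMod m) ∧ (ε' x').1 = ((r' * k : ℤ) : ZMod m') ∧
    (ε x).2 = (ε' x').2

theorem flip_CS {m m' : ℕ} (ε : G ≃+ ZMod m × A) (ε' : G' ≃+ ZMod m' × A) :
    flip (CS q m m' ε ε') = CS q m' m ε' ε := by
  funext x y
  simp only [flip, CS, eq_iff_iff]
  constructor <;>
  · rintro ⟨k, k', h1, h2, h3, h4⟩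
    exact ⟨k', k, h2, h1, by rwa [dvd_sub_comm], h4.symm⟩

theorem flip_CT {m m' : ℕ} (ε : G ≃+ ZMod m × A) (ε' : G' ≃+ ZMod m' × A) :
    flip (CT r r' m m' ε ε') = CT r' r m' m ε' ε := by
  funext x y
  simp only [flip, CT, eq_iff_iff]
  constructor <;>
  · rintro ⟨k, h1, h2, h3⟩
    exact ⟨k, h2, h1, h3.symm⟩

theorem int_rep (m : ℕ) (a : ZMod m) : ∃ k : ℤ, a = k := by
  obtain ⟨k, hk⟩ := ZMod.intCast_surjective a
  exact ⟨k, hk.symm⟩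

theorem half_concrete (hq0 : 0 < q) (hr : 0 < r) (hr' : 0 < r') (hqr : q ∣ r) (hqr' : q ∣ r')
    (hA : ∀ a : A, q • a = 0)
    (ε : G ≃+ ZMod (r * q) × A) (ε' : G' ≃+ ZMod (r' * q) × A) :
    Half q r r' (CS q _ _ ε ε') (CT r r' _ _ ε ε') where
  Ssub := by
    rintro x y x' y' ⟨k, k', h1, h2, h3, h4⟩ ⟨l, l', g1, g2, g3, g4⟩
    refine ⟨k - l, k' - l', by simp [h1, g1], by simp [h2, g2], ?_, by simp [h4, g4]⟩
    have := dvd_sub h3 g3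
    rwa [sub_sub_sub_comm] at this
  Tsub := by
    rintro x y x' y' ⟨k, h1, h2, h4⟩ ⟨l, g1, g2, g4⟩
    exact ⟨k - l, by simp [h1, g1, mul_sub], by simp [h2, g2, mul_sub], by simp [h4, g4]⟩
  Sl x := by
    obtain ⟨k, hk⟩ := int_rep _ (ε x).1
    exact ⟨ε'.symm (k, (ε x).2), k, k, hk, by simp, by simp, by simp⟩
  S0 := by
    rintro x ⟨k, k', h1, h2, h3, h4⟩
    have h5 : ((r' * q : ℕ) : ℤ) ∣ k' := by
      rw [← ZMod.intCast_zmod_eq_zero_iff_dvd] 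
      simpa using h2.symm
    have h6 : (q : ℤ) ∣ k := by
      have : (q : ℤ) ∣ k' := (Dvd.intro_left (r' : ℤ) (by push_cast; rfl)).trans h5
      simpa using dvd_add h3 this
    obtain ⟨j, rfl⟩ := h6
    refine ⟨ε.symm (j, 0), ε.injective ?_⟩
    ext
    · simp [h1]
    · simp [h4]
  Sq z := by
    obtain ⟨k, hk⟩ := int_rep _ (ε z).1
    refine ⟨q * k, 0, by simp [hk], by simp, by simp, by simp [hA]⟩
  Tl := by
    intro y hy
    obtain ⟨m, hm⟩ := int_rep _ (ε y).1
    have h1 : ((r * q : ℕ) : ℤ) ∣ q * m := by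
      rw [← ZMod.intCast_zmod_eq_zero_iff_dvd]
      have := congrArg (fun x => (ε x).1) hy
      simpa [hm] using this
    have h2 : (r : ℤ) ∣ m := by
      push_cast at h1
      rw [mul_comm] at h1
      exact Int.dvd_of_mul_dvd_mul_left (by positivity) h1
    obtain ⟨k, rfl⟩ := h2
    exact ⟨ε'.symm ((r' * k : ℤ), (ε y).2), k, hm, by simp, by simp⟩
  Tq := by
    rintro y y' ⟨k, h1, h2, h4⟩
    apply ε.injective
    ext
    · have : (((r * q : ℕ) : ℤ) * k : ZMod (r * q)) = 0 := by
        rw [Int.cast_natCast, ZMod.natCast_self, zero_mul]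
      simp only [map_nsmul, Prod.smul_fst, h1, map_zero, Prod.fst_zero]
      rw [← this, nsmul_eq_mul]
      push_cast
      ring
    · simp [hA]
  T0 := by
    rintro y ⟨k, h1, h2, h4⟩
    have h5 : ((r' * q : ℕ) : ℤ) ∣ r' * k := by
      rw [← ZMod.intCast_zmod_eq_zero_iff_dvd] 
      simpa using h2.symm
    have h6 : (q : ℤ) ∣ k := by
      push_cast at h5
      exact Int.dvd_of_mul_dvd_mul_left (by positivity) h5
    apply ε.injective
    ext
    · rw [h1, map_zero, Prod.fst_zero, ZMod.intCast_zmod_eq_zero_iff_dvd]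
      push_cast
      exact mul_dvd_mul_left _ h6
    · simp [h4]
  TS := by
    rintro y y' ⟨k, h1, h2, h4⟩
    refine ⟨_, _, h1, h2, ?_, h4⟩
    rw [← sub_mul]
    exact Dvd.dvd.mul_right (dvd_sub (Int.natCast_dvd_natCast.2 hqr)
      (Int.natCast_dvd_natCast.2 hqr')) _
  kap := by
    rintro x x' ⟨k, k', h1, h2, ⟨j, hj⟩, h4⟩
    obtain ⟨u, rfl⟩ := hqr
    obtain ⟨v, rfl⟩ := hqr'
    have hA' : ∀ (w : ℕ) (a : A), (q * w) • a = 0 := by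
      intro w a; rw [mul_comm, mul_nsmul', hA, nsmul_zero]
    refine ⟨k, by simp [h1], ?_, by simp [hA']⟩
    have hk : k = k' + q * j := by linarith
    rw [hk, mul_add, ← mul_assoc, Int.cast_add]
    have : ((((q * v * q : ℕ) : ℤ) * j : ℤ) : ZMod (q * v * q)) = 0 := by
      rw [Int.cast_mul, Int.cast_natCast, ZMod.natCast_self, zero_mul]
    have h7 : (((q * v : ℕ) : ℤ) * (q : ℤ) * j : ℤ) = ((q * v * q : ℕ) : ℤ) * j := by
      push_cast; ring
    rw [h7, this]
    simp [h2]

theorem arel_concrete (hq0 : 0 < q) (hr : 0 < r) (hr' : 0 < r') (hqr : q ∣ r) (hqr' : q ∣ r')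
    (hA : ∀ a : A, q • a = 0)
    (ε : G ≃+ ZMod (r * q) × A) (ε' : G' ≃+ ZMod (r' * q) × A) :
    ARel q r r' (CS q _ _ ε ε') (CT r r' _ _ ε ε') := by
  refine ⟨half_concrete hq0 hr hr' hqr hqr' hA ε ε', ?_⟩
  rw [flip_CS, flip_CT]
  exact half_concrete hq0 hr' hr hqr' hqr hA ε' ε

end concrete

section lifting

theorem bracket_tors {q m : ℕ} {L A : Type} [LieRing L] [AddCommGroup A]
    (hA : ∀ a : A, q • a = 0) (ε : L ≃+ ZMod m × A) (x y : L) : q • ⁅x, y⁆ = 0 := by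
  have hd : ∀ l : L, ∃ (k : ℤ) (a : L), l = k • ε.symm (1, 0) + a ∧ q • a = 0 := by
    intro l
    obtain ⟨k, hk⟩ := int_rep _ (ε l).1
    refine ⟨k, ε.symm (0, (ε l).2), ε.injective ?_, ε.injective ?_⟩
    · ext
      · simp [hk]
      · simp
    · ext
      · simp
      · simp [hA]
  obtain ⟨k, a, rfl, ha⟩ := hd x
  obtain ⟨l, b, rfl, hb⟩ := hd y
  have h1 : ∀ z : L, q • ⁅a, z⁆ = 0 := fun z => by rw [← nsmul_lie, ha, zero_lie]
  have h2 : ∀ z : L, q • ⁅z, b⁆ = 0 := fun z => by rw [← lie_nsmul, hb, lie_zero]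
  simp only [lie_add, add_lie, zsmul_lie, lie_zsmul, lie_self, smul_add, smul_zero, h1, h2,
    smul_comm q, zero_add, add_zero]

theorem lift_iso {p f r : ℕ} (hp : p.Prime) (hf : 1 ≤ f) (hr : 0 < r) {j : ℕ} (hrp : r * p ^ f = p ^ j)
    {L L' A : Type} [LieRing L] [LieRing L'] [AddCommGroup A] [Finite L']
    (hcard : Nat.card L = Nat.card L')
    (hA : ∀ a : A, p ^ f • a = 0) (ε : L ≃+ ZMod (r * p ^ f) × A) (h : LRel (p ^ f) r r L L') :
    ∃ g : L ≃+ L', ∀ x y, g ⁅x, y⁆ = ⁅g x, g y⁆ := by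
  obtain ⟨S, T, h, hb⟩ := h
  have hq0 : 0 < p ^ f := pow_pos hp.pos f
  obtain ⟨x', hx'⟩ := h.1.Sl (ε.symm (1, 0))
  have hT : ∀ a : A, ∃ y', T (ε.symm (0, a)) y' := by
    intro a
    refine h.1.Tl (ε.injective ?_)
    ext
    · simp
    · simp [hA]
  choose t ht using hT
  have htadd : ∀ a b, t (a + b) = t a + t b := by
    intro a b
    refine h.Tuniq (ht _) ?_
    have := h.1.Tadd (ht a) (ht b)
    rw [← map_add] at this
    simpa using this
  have hx0 : (r * p ^ f) • x' = 0 := by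
    have := h.2.Tq (h.1.kap hx')
    rwa [smul_smul, mul_comm] at this
  have hz : (zmultiplesHom L') x' ((r * p ^ f : ℕ) : ℤ) = 0 := by
    rw [zmultiplesHom_apply, natCast_zsmul, hx0]
  let φ : ZMod (r * p ^ f) →+ L' := ZMod.lift (r * p ^ f) ⟨(zmultiplesHom L') x', hz⟩
  have hφ : ∀ k : ℕ, φ (k : ZMod (r * p ^ f)) = k • x' := by
    intro k
    have := ZMod.lift_coe (r * p ^ f) ⟨(zmultiplesHom L') x', hz⟩ (k : ℤ)
    simpa [φ] using this
  let g : L →+ L' := 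
    { toFun := fun l => φ (ε l).1 + t (ε l).2
      map_zero' := by
        have : t 0 = 0 := by simpa using htadd 0 0
        simp [this]
      map_add' := fun x y => by simp [htadd]; abel }
  have : NeZero (r * p ^ f) := ⟨(Nat.mul_pos hr hq0).ne'⟩
  have hdec : ∀ l : L, ∃ k : ℕ, (ε l).1 = k ∧ l = k • ε.symm (1, 0) + ε.symm (0, (ε l).2) ∧
      g l = k • x' + t (ε l).2 := by
    intro l
    refine ⟨(ε l).1.val, by simp, ε.injective ?_, ?_⟩
    · ext
      · simp
      · simp
    · rw [← hφ]; simp [g]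
  have hS : ∀ l, S l (g l) := by
    intro l
    obtain ⟨k, -, h1, h2⟩ := hdec l
    rw [h2]
    nth_rewrite 1 [h1]
    exact h.1.Sadd (h.1.Snsmul hx' k) (h.1.TS (ht _))
  have hTg : ∀ l, p ^ f • l = 0 → T l (g l) := by
    intro l hl
    obtain ⟨k, h0, h1, h2⟩ := hdec l
    have h3 : r * p ^ f ∣ p ^ f * k := by
      rw [← ZMod.natCast_eq_zero_iff]
      have := congrArg (fun x => (ε x).1) hl
      simpa [h0] using this
    rw [mul_comm] at h3
    obtain ⟨i, rfl⟩ := Nat.dvd_of_mul_dvd_mul_left hq0 h3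
    rw [h2]
    nth_rewrite 1 [h1]
    refine h.1.Tadd ?_ (ht _)
    rw [mul_comm, mul_smul, mul_smul]
    exact h.1.Tnsmul (h.1.kap hx') i
  have hinj0 : ∀ i, ∀ l, p ^ i • l = 0 → g l = 0 → l = 0 := by
    intro i
    induction i with
    | zero => intro l h1 _; simpa using h1
    | succ i ih =>
      intro l h1 h2
      have h3 : p • l = 0 := ih (p • l) (by rw [smul_smul, ← pow_succ, h1]) (by
        rw [map_nsmul, h2, smul_zero])
      have h4 : p ^ f • l = 0 := by
        obtain ⟨d, rfl⟩ := Nat.exists_eq_add_of_le' hf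
        rw [pow_succ, mul_smul, h3, smul_zero]
      have h5 := hTg l h4
      rw [h2] at h5
      exact h.1.T0 h5
  have hkill : ∀ l : L, p ^ j • p ^ f • l = 0 := by
    intro l
    apply ε.injective
    ext
    · rw [← hrp]
      simp only [map_nsmul, Prod.smul_fst, map_zero, Prod.fst_zero]
      rw [nsmul_eq_mul, ZMod.natCast_self, zero_mul]
    · simp [hA]
  have hinj : Function.Injective g := by
    rw [injective_iff_map_eq_zero]
    intro l hl
    exact hinj0 (j + f) l (by rw [pow_add, mul_smul, hkill]) hl
  have hbij : Function.Bijective g := by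
    have : Finite L := Finite.of_injective g hinj
    exact (Nat.bijective_iff_injective_and_card g).2 ⟨hinj, hcard⟩
  refine ⟨AddEquiv.ofBijective g hbij, fun x y => ?_⟩
  have h1 := hb (hS x) (hS y)
  exact h.Tuniq (hTg _ (h.1.Tq h1)) h1

end lifting

theorem decomp {p e : ℕ} (hp : p.Prime) (he : 1 ≤ e) (G : Type) [AddCommGroup G] [Finite G]
    (hG : AddMonoid.exponent G = p ^ e) :
    ∃ (A : Type) (_ : AddCommGroup A), Nonempty (G ≃+ ZMod (p ^ e) × A) := by
  classical
  obtain ⟨ι, _, P, hP, E, ⟨ε0⟩⟩ := AddCommGroup.equiv_directSum_zmod_of_finite G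
  let ε : G ≃+ (∀ i, ZMod (P i ^ E i)) := ε0.trans (DirectSum.addEquivProd _)
  have hkill : ∀ g : G, p ^ e • g = 0 := fun g => by
    rw [← hG]; exact AddMonoid.exponent_nsmul_eq_zero g
  have hdvd : ∀ i, P i ^ E i ∣ p ^ e := by
    intro i
    rw [← ZMod.natCast_eq_zero_iff]
    have := congrArg (fun x => ε x i) (hkill (ε.symm (fun _ => 1)))
    simpa using this
  have hex : ∃ i, P i ^ E i = p ^ e := by
    by_contra! hne
    have hd : ∀ i, P i ^ E i ∣ p ^ (e - 1) := by
      intro i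
      obtain ⟨k, hk, hk'⟩ := (Nat.dvd_prime_pow hp).1 (hdvd i)
      rw [hk']
      have : k ≠ e := fun h => hne i (by rw [hk', h])
      exact pow_dvd_pow _ (by omega)
    have : AddMonoid.exponent G ∣ p ^ (e - 1) := by
      rw [AddMonoid.exponent_dvd_iff_forall_nsmul_eq_zero]
      intro g
      apply ε.injective
      funext i
      have := (ZMod.natCast_eq_zero_iff (p ^ (e - 1)) (P i ^ E i)).2 (hd i)
      rw [map_nsmul, Pi.smul_apply, nsmul_eq_mul, this]
      simp
    rw [hG, Nat.pow_dvd_pow_iff_le_right hp.one_lt] at this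
    omega
  obtain ⟨i, hi⟩ := hex
  rw [← hi]
  refine ⟨∀ j : {j // j ≠ i}, ZMod (P j ^ E j), inferInstance, ⟨ε.trans ?_⟩⟩
  exact { Equiv.piSplitAt i (fun i => ZMod (P i ^ E i)) with
    map_add' := fun x y => by ext <;> simp }

/-- Existence of a partner. -/
theorem partner {p f e n e' n' : ℕ} (hp : p.Prime) (hf : 1 ≤ f) (hn : n = e + f) (hn' : n' = e' + f)
    (he : 2 * f ≤ e) (he' : 2 * f ≤ e') (L L' : Type) [LieRing L]
    (hL : Nat.card L = p ^ n) (hx : AddMonoid.exponent L = p ^ e) (hL' : Nat.card L' = p ^ n') :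
    ∃ s : LieRing L', LRel (p ^ f) (p ^ (e - f)) (p ^ (e' - f)) L L' ∧
      AddMonoid.exponent L' = p ^ e' := by
  have : Finite L := Nat.finite_of_card_ne_zero (by rw [hL]; exact (pow_pos hp.pos _).ne')
  have : Finite L' := Nat.finite_of_card_ne_zero (by rw [hL']; exact (pow_pos hp.pos _).ne')
  obtain ⟨A, _, ⟨ε⟩⟩ := decomp hp (by omega) L hx
  have hAc : Nat.card A = p ^ f := by
    have := Nat.card_congr ε.toEquiv
    rw [hL, Nat.card_prod, Nat.card_zmod, hn, pow_add] at this
    exact (Nat.eq_of_mul_eq_mul_left (pow_pos hp.pos _) this).symm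
  have hA : ∀ a : A, p ^ f • a = 0 := fun a => by rw [← hAc]; exact card_nsmul_eq_zero'
  have hAf : Finite A := Nat.finite_of_card_ne_zero (by rw [hAc]; exact (pow_pos hp.pos _).ne')
  have : NeZero (p ^ e') := ⟨(pow_pos hp.pos _).ne'⟩
  have hc : Nat.card L' = Nat.card (ZMod (p ^ e') × A) := by
    rw [hL', Nat.card_prod, Nat.card_zmod, hAc, hn', pow_add]
  let eq : L' ≃ ZMod (p ^ e') × A := (Finite.card_eq.1 hc).some
  let I : AddCommGroup L' := eq.addCommGroup
  let ε' : L' ≃+ ZMod (p ^ e') × A := eq.addEquiv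
  have h1 : p ^ e = p ^ (e - f) * p ^ f := by rw [← pow_add]; congr 1; omega
  have h2 : p ^ e' = p ^ (e' - f) * p ^ f := by rw [← pow_add]; congr 1; omega
  have hexp : AddMonoid.exponent L' = p ^ e' := by
    rw [AddMonoid.exponent_eq_of_addEquiv ε', AddMonoid.exponent_prod, ZMod.exponent]
    have : AddMonoid.exponent A ∣ p ^ e' := by
      refine (AddMonoid.exponent_dvd_iff_forall_nsmul_eq_zero.2 hA).trans (pow_dvd_pow _ (by omega))
    exact Nat.lcm_eq_left this
  have hbt := bracket_tors hA ε
  have hrel : ∃ S T : L → L' → Prop, ARel (p ^ f) (p ^ (e - f)) (p ^ (e' - f)) S T := by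
    clear_value ε' 
    rw [h1] at ε
    rw [h2] at ε'
    exact ⟨_, _, arel_concrete (pow_pos hp.pos _) (pow_pos hp.pos _) (pow_pos hp.pos _)
      (pow_dvd_pow _ (by omega)) (pow_dvd_pow _ (by omega)) hA ε ε'⟩
  obtain ⟨S, T, hST⟩ := hrel
  obtain ⟨s, hs, hr⟩ := construct hST hbt
  refine ⟨s, hr, ?_⟩
  rw [← hexp, ← hs]

theorem iso_of_rel {p f e n : ℕ} (hp : p.Prime) (hf : 1 ≤ f) (hn : n = e + f)
    (he : 2 * f ≤ e) (L L' : Type) [LieRing L] [LieRing L']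
    (hL : Nat.card L = p ^ n) (hx : AddMonoid.exponent L = p ^ e) (hL' : Nat.card L' = p ^ n)
    (h : LRel (p ^ f) (p ^ (e - f)) (p ^ (e - f)) L L') :
    ∃ g : L ≃+ L', ∀ x y, g ⁅x, y⁆ = ⁅g x, g y⁆ := by
  have : Finite L := Nat.finite_of_card_ne_zero (by rw [hL]; exact (pow_pos hp.pos _).ne')
  have : Finite L' := Nat.finite_of_card_ne_zero (by rw [hL']; exact (pow_pos hp.pos _).ne')
  obtain ⟨A, _, ⟨ε⟩⟩ := decomp hp (by omega) L hx
  have hAc : Nat.card A = p ^ f := by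
    have := Nat.card_congr ε.toEquiv
    rw [hL, Nat.card_prod, Nat.card_zmod, hn, pow_add] at this
    exact (Nat.eq_of_mul_eq_mul_left (pow_pos hp.pos _) this).symm
  have hA : ∀ a : A, p ^ f • a = 0 := fun a => by rw [← hAc]; exact card_nsmul_eq_zero'
  have h1 : p ^ e = p ^ (e - f) * p ^ f := by rw [← pow_add]; congr 1; omega
  have h1' := h1
  rw [h1] at ε
  exact lift_iso hp hf (pow_pos hp.pos _) h1.symm (hL.trans hL'.symm) hA ε h

theorem quot_card {X Y : Type} (rX : X → X → Prop) (rY : Y → Y → Prop) (R : X → Y → Prop)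
    (hX : ∀ x, rX x x) (hY : ∀ y, rY y y) (hl : ∀ x, ∃ y, R x y) (hr : ∀ y, ∃ x, R x y)
    (h1 : ∀ x x' y y', R x y → R x' y' → rX x x' → rY y y')
    (h2 : ∀ x x' y y', R x y → R x' y' → rY y y' → rX x x') :
    Nat.card (Quot rX) = Nat.card (Quot rY) := by
  choose F hF using hl
  choose G hG using hr
  refine Nat.card_congr
    { toFun := Quot.map F fun x x' h => h1 _ _ _ _ (hF x) (hF x') h
      invFun := Quot.map G fun y y' h => h2 _ _ _ _ (hG y) (hG y') h
      left_inv := ?_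
      right_inv := ?_ }
  · rintro ⟨x⟩
    exact Quot.sound (h2 _ _ _ _ (hG _) (hF x) (hY _))
  · rintro ⟨y⟩
    exact Quot.sound (h1 _ _ _ _ (hF _) (hG y) (hX _))

end PsiAux

/-- Fix `f ≥ 3`.  For every prime `p > f + 1`, the number of isomorphism
classes of Lie rings of order `p ^ n` which are nilpotent of class less than `p` and whose
underlying abelian group has coexponent `f` is independent of `n` for `n ≥ 3f`. -/
theorem psi_lie_stable (f : ℕ) (hf : 3 ≤ f) (p : ℕ) (hp : p.Prime) (hpf : p > f + 1)
    (n n' : ℕ) (hn : 3 * f ≤ n) (hn' : 3 * f ≤ n') :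
    PsiLie p n f = PsiLie p n' f := by
  have hpos : 1 ≤ f := by omega
  have hcard : ∀ m, Nat.card (Fin (p ^ m)) = p ^ m := fun m => Nat.card_fin _
  have hnt : ∀ m, 3 * f ≤ m → Nontrivial (Fin (p ^ m)) := fun m hm =>
    Fin.nontrivial_iff_two_le.2 (hp.two_le.trans (Nat.le_self_pow (by omega) p))
  have := hnt n hn
  have := hnt n' hn'
  have hexp : ∀ {m : ℕ}, 3 * f ≤ m → ∀ s : LieRing (Fin (p ^ m)),
      (∃ e : ℕ, @AddMonoid.exponent (Fin (p ^ m)) s.toAddCommGroup.toAddGroup.toSubNegMonoid.toAddMonoid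
        = p ^ e ∧ m - e = f) →
      @AddMonoid.exponent (Fin (p ^ m)) s.toAddCommGroup.toAddGroup.toSubNegMonoid.toAddMonoid
        = p ^ (m - f) := by
    rintro m hm s ⟨e, h1, h2⟩
    rw [h1]; congr 1; omega
  unfold PsiLie lieClassCount
  refine PsiAux.quot_card _ _ (fun s t => @PsiAux.LRel (p ^ f) (p ^ (n - f - f)) (p ^ (n' - f - f))
    _ _ s.1 t.1) ?_ ?_ ?_ ?_ ?_ ?_
  · intro s
    exact ⟨@AddEquiv.refl _ (addOfLieRing _ s.1), fun _ _ => rfl⟩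
  · intro s
    exact ⟨@AddEquiv.refl _ (addOfLieRing _ s.1), fun _ _ => rfl⟩
  · rintro ⟨s, hs1, hs2, hs3⟩
    obtain ⟨t, ht, hte⟩ := @PsiAux.partner p f (n - f) n (n' - f) n' hp hpos (by omega) (by omega)
      (by omega) (by omega) (Fin (p ^ n)) (Fin (p ^ n')) s (hcard n) (hexp hn s hs3) (hcard n')
    exact ⟨⟨t, (@PsiAux.LRel.nilp _ _ _ _ _ s t _ _ ht).1 hs1,
      (@PsiAux.LRel.cls _ _ _ _ _ s t _ _ ht) ▸ hs2, n' - f, hte, by omega⟩, ht⟩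
  · rintro ⟨s, hs1, hs2, hs3⟩
    obtain ⟨t, ht, hte⟩ := @PsiAux.partner p f (n' - f) n' (n - f) n hp hpos (by omega) (by omega)
      (by omega) (by omega) (Fin (p ^ n')) (Fin (p ^ n)) s (hcard n') (hexp hn' s hs3) (hcard n)
    exact ⟨⟨t, (@PsiAux.LRel.nilp _ _ _ _ _ s t _ _ ht).1 hs1,
      (@PsiAux.LRel.cls _ _ _ _ _ s t _ _ ht) ▸ hs2, n - f, hte, by omega⟩,
      @PsiAux.LRel.symm _ _ _ _ _ s t ht⟩
  · rintro ⟨s, hs⟩ ⟨s', hs'⟩ ⟨t, ht⟩ ⟨t', ht'⟩ h1 h2 ⟨g, hg⟩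
    have h3 := @PsiAux.LRel.symm _ _ _ _ _ s t h1
    have h4 := @PsiAux.LRel.symm _ _ _ _ _ s' t' h2
    have h5 := @PsiAux.LRel.congr_right _ _ _ _ _ _ t' s' s h4 g hg
    have h6 := @PsiAux.LRel.symm _ _ _ _ _ t' s h5
    have h7 := @PsiAux.LRel.trans _ _ _ _ _ _ _ t s t' h3 h6
    exact @PsiAux.iso_of_rel p f (n' - f) n' hp hpos (by omega) (by omega) _ _ t t'
      (hcard n') (hexp hn' t ht.2.2) (hcard n') h7
  · rintro ⟨s, hs⟩ ⟨s', hs'⟩ ⟨t, ht⟩ ⟨t', ht'⟩ h1 h2 ⟨g, hg⟩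
    have h4 := @PsiAux.LRel.symm _ _ _ _ _ s' t' h2
    have h5 := @PsiAux.LRel.congr_right _ _ _ _ _ _ s' t' t h2 g hg
    have h6 := @PsiAux.LRel.symm _ _ _ _ _ s' t h5
    have h7 := @PsiAux.LRel.trans _ _ _ _ _ _ _ s t s' h1 h6
    exact @PsiAux.iso_of_rel p f (n - f) n hp hpos (by omega) (by omega) _ _ s s'
      (hcard n) (hexp hn s hs.2.2) (hcard n) h7
end

section
/- Let p be a prime, f a positive integer, and let U be a Lie ring satisfying: (P-1) U is nilpotent, has additive coexponent f, and μ_1(U) = μ_2(U) ≤ f; (P-2) |U| = p^{f + μ_1(U)}; (P-3) U possesses a central element of order p^{μ_1(U)}. Let z be a central element of U of order p^{μ_1(U)}, let n - f ≥ 2μ_1(U), let w be a generator of ℤ/p^{n-f}ℤ (regarded as an abelian Lie ring), and let θ : (ℤ/p^{n-f}ℤ)w → Der(U)_z be a Lie ring homomorphism. Then: (1) the subgroup ⟨p^{n-f-μ_1(U)} w - z⟩ is an ideal of U ⋊_θ (ℤ/p^{n-f}ℤ)w; (2) the quotient U(n-f, w, wθ, z) = (U ⋊_θ (ℤ/p^{n-f}ℤ)w)/⟨p^{n-f-μ_1(U)}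 w - z⟩ is a Lie ring of order p^n and additive coexponent f; (3) μ_2(U(n-f, w, wθ, z)) = μ_1(U) and Ω_{μ_1(U)}(U(n-f, w, wθ, z)) ≅ U; (4) if the derivation wθ is nilpotent then the Lie ring U(n-f, w, wθ, z) is nilpotent. -/
/-- `Ω_i(A) = {x : p^i • x = 0}` for an additive group `A`. -/
def aOmega (p : ℕ) (A : Type) [AddCommGroup A] (i : ℕ) : AddSubgroup A :=
  AddSubgroup.closure {x : A | p ^ i • x = 0}

/-- `ω_i(A)`, defined by `p ^ ω_i(A) = |Ω_i(A)/Ω_{i-1}(A)|`. -/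
noncomputable def aOmegaInv (p : ℕ) (A : Type) [AddCommGroup A] (i : ℕ) : ℕ :=
  ((aOmega p A (i - 1)).relIndex (aOmega p A i)).factorization p

/-- `μ_j(A)` (for `j ≥ 1`): the type invariants of the abelian `p`-group `A`. -/
noncomputable def aMuInv (p : ℕ) (A : Type) [AddCommGroup A] (j : ℕ) : ℕ :=
  Nat.card {i : ℕ // 1 ≤ i ∧ j ≤ aOmegaInv p A i}

attribute [local instance 100] LieRing.ofAssociativeRing

/-- The semidirect product `L ⋊_θ (ℤ/mℤ)` of a Lie ring `L` with the abelian Lie ring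
`ℤ/mℤ`, along a Lie ring homomorphism `θ : ℤ/mℤ → Der(L)`; derivations act on the right,
so the bracket is `[(l₁,c₁),(l₂,c₂)] = ([l₁,l₂] + l₁(θ c₂) - l₂(θ c₁), [c₁,c₂])`. -/
@[ext] structure LieSD (L : Type) (m : ℕ) [LieRing L]
    (θ : ZMod m →ₗ⁅ℤ⁆ LieDerivation ℤ L L) : Type where
  fst : L
  snd : ZMod m

namespace LieSD

variable {L : Type} {m : ℕ} [LieRing L] {θ : ZMod m →ₗ⁅ℤ⁆ LieDerivation ℤ L L}

def prodEquiv (θ : ZMod m →ₗ⁅ℤ⁆ LieDerivation ℤ L L) : LieSD L m θ ≃ L × ZMod m where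
  toFun a := (a.fst, a.snd)
  invFun a := ⟨a.1, a.2⟩
  left_inv _ := rfl
  right_inv _ := rfl

instance : AddCommGroup (LieSD L m θ) := (prodEquiv θ).addCommGroup

@[simp] lemma add_fst (a b : LieSD L m θ) : (a + b).fst = a.fst + b.fst := rfl
@[simp] lemma add_snd (a b : LieSD L m θ) : (a + b).snd = a.snd + b.snd := rfl
@[simp] lemma zero_fst : (0 : LieSD L m θ).fst = 0 := rfl
@[simp] lemma zero_snd : (0 : LieSD L m θ).snd = 0 := rfl
@[simp] lemma mk_fst (a : L) (b : ZMod m) : (LieSD.mk a b : LieSD L m θ).fst = a := rfl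
@[simp] lemma mk_snd (a : L) (b : ZMod m) : (LieSD.mk a b : LieSD L m θ).snd = b := rfl

lemma theta_intCast (k : ℤ) : θ ((k : ZMod m)) = k • θ 1 := by
  have h : ((k : ZMod m)) = k • (1 : ZMod m) := by simp
  rw [h, ← LieHom.coe_toLinearMap, map_zsmul]

lemma theta_comm (a b : ZMod m) (x : L) : θ a (θ b x) = θ b (θ a x) := by
  obtain ⟨j, rfl⟩ := ZMod.intCast_surjective a
  obtain ⟨k, rfl⟩ := ZMod.intCast_surjective b
  have dz : ∀ (k : ℤ) (y : L), θ 1 (k • y) = k • θ 1 y := fun k y =>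
    map_zsmul (θ 1).toLinearMap k y
  rw [theta_intCast, theta_intCast]
  simp only [LieDerivation.smul_apply, dz]
  rw [smul_comm]

lemma theta_zero : θ (0 : ZMod m) = 0 := by
  rw [← LieHom.coe_toLinearMap]
  exact map_zero _

instance : LieRing (LieSD L m θ) :=
  { (inferInstance : AddCommGroup (LieSD L m θ)) with
    bracket := fun a b =>
      ⟨⁅a.fst, b.fst⁆ + (θ b.snd) a.fst - (θ a.snd) b.fst, ⁅a.snd, b.snd⁆⟩
    add_lie := by
      intro x y z
      apply LieSD.ext <;> simp [add_lie, map_add] <;> abel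
    lie_add := by
      intro x y z
      apply LieSD.ext <;> simp [lie_add, map_add] <;> abel
    lie_self := by
      intro x
      apply LieSD.ext <;> simp
    leibniz_lie := by
      rintro ⟨x1, x2⟩ ⟨y1, y2⟩ ⟨z1, z2⟩
      apply LieSD.ext
      · show ⁅x1, ⁅y1, z1⁆ + θ z2 y1 - θ y2 z1⁆ + θ ⁅y2, z2⁆ x1 -
              θ x2 (⁅y1, z1⁆ + θ z2 y1 - θ y2 z1) =
            (⁅⁅x1, y1⁆ + θ y2 x1 - θ x2 y1, z1⁆ +
                θ z2 (⁅x1, y1⁆ + θ y2 x1 - θ x2 y1) - θ ⁅x2, y2⁆ z1) +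
              (⁅y1, ⁅x1, z1⁆ + θ z2 x1 - θ x2 z1⁆ + θ ⁅x2, z2⁆ y1 -
                θ y2 (⁅x1, z1⁆ + θ z2 x1 - θ x2 z1))
        have h1 : ⁅y2, z2⁆ = (0 : ZMod m) := by simp [Ring.lie_def, mul_comm]
        have h2 : ⁅x2, y2⁆ = (0 : ZMod m) := by simp [Ring.lie_def, mul_comm]
        have h3 : ⁅x2, z2⁆ = (0 : ZMod m) := by simp [Ring.lie_def, mul_comm]
        rw [h1, h2, h3, theta_zero]
        simp only [LieDerivation.coe_zero, Pi.zero_apply, add_zero, zero_sub, sub_zero,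
          zero_add, lie_add, lie_sub, add_lie, sub_lie, map_add, map_sub,
          LieDerivation.apply_lie_eq_add]
        rw [theta_comm x2 z2 y1, theta_comm y2 x2 z1, theta_comm y2 z2 x1,
          leibniz_lie x1 y1 z1, ← lie_skew ((θ z2) x1) y1]
        abel
      · show ⁅x2, ⁅y2, z2⁆⁆ = ⁅⁅x2, y2⁆, z2⁆ + ⁅y2, ⁅x2, z2⁆⁆
        exact leibniz_lie x2 y2 z2 }

end LieSD

lemma mem_aOmega_iff (p : ℕ) (A : Type) [AddCommGroup A] (i : ℕ) (x : A) :
    x ∈ aOmega p A i ↔ p ^ i • x = 0 := by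
  constructor
  · intro h
    unfold aOmega at h
    induction h using AddSubgroup.closure_induction with
    | mem x hx => exact hx
    | zero => simp
    | add x y _ _ hx hy => rw [smul_add, hx, hy, add_zero]
    | neg x _ hx => rw [smul_neg, hx, neg_zero]
  · intro h
    exact AddSubgroup.subset_closure h

lemma aOmega_map_eq (p : ℕ) {A B : Type} [AddCommGroup A] [AddCommGroup B] (g : A →+ B)
    (hg : Function.Injective g) (i : ℕ) (h : aOmega p B i ≤ g.range) :
    (aOmega p A i).map g = aOmega p B i := by
  ext x
  constructor
  · rintro ⟨a, ha, rfl⟩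
    have ha' := (mem_aOmega_iff p A i a).1 ha
    rw [mem_aOmega_iff, ← map_nsmul, ha', map_zero]
  · intro hx
    obtain ⟨a, rfl⟩ := h hx
    refine ⟨a, ?_, rfl⟩
    rw [mem_aOmega_iff, ← map_nsmul] at hx
    refine (mem_aOmega_iff p A i a).2 (hg ?_)
    rw [hx, map_zero]

lemma aOmegaInv_eq_of_le (p : ℕ) {A B : Type} [AddCommGroup A] [AddCommGroup B] (g : A →+ B)
    (hg : Function.Injective g) (i m : ℕ) (him : i ≤ m) (h : aOmega p B m ≤ g.range) :
    aOmegaInv p B i = aOmegaInv p A i := by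
  have hle : ∀ j ≤ m, aOmega p B j ≤ g.range := by
    intro j hj x hx
    apply h
    rw [mem_aOmega_iff] at hx ⊢
    rw [← Nat.sub_add_cancel hj, pow_add, mul_smul, hx, smul_zero]
  unfold aOmegaInv
  rw [← aOmega_map_eq p g hg i (hle i him),
    ← aOmega_map_eq p g hg (i-1) (hle (i-1) (by omega)),
    AddSubgroup.relIndex_map_map_of_injective _ _ hg]

lemma aOmegaInv_le_one (p : ℕ) (hp : p.Prime) {B : Type} [AddCommGroup B] [Finite B] (t : B)
    (i : ℕ) (hi : 1 ≤ i) (h : ∀ q : B, p ^ (i-1) • q ∈ AddSubgroup.zmultiples t) :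
    aOmegaInv p B i ≤ 1 := by
  classical
  unfold aOmegaInv
  have hk : aOmega p B (i-1) = (nsmulAddMonoidHom (α := B) (p ^ (i-1))).ker := by
    ext x
    rw [mem_aOmega_iff, AddMonoidHom.mem_ker]; rfl
  rw [hk, AddSubgroup.relIndex_ker]
  set M := (aOmega p B i).map (nsmulAddMonoidHom (α := B) (p ^ (i-1))) with hM
  have hMt : ∀ x ∈ M, x ∈ AddSubgroup.zmultiples t ∧ p • x = 0 := by
    rintro _ ⟨a, ha, rfl⟩
    refine ⟨h a, ?_⟩
    have ha' := (mem_aOmega_iff p B i a).1 ha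
    show p • (p ^ (i-1) • a) = 0
    rw [← mul_smul, ← pow_succ', Nat.sub_add_cancel hi, ha']
  have hcard : Nat.card M ≤ p := by
    haveI : Fintype (AddSubgroup.zmultiples t) := Fintype.ofFinite _
    have h1 := IsAddCyclic.card_nsmul_eq_zero_le (α := AddSubgroup.zmultiples t) hp.pos
    refine le_trans ?_ h1
    haveI : Fintype M := Fintype.ofFinite _
    rw [Nat.card_eq_fintype_card, ← Finset.card_univ]
    refine Finset.card_le_card_of_injOn (fun x : M => ⟨x.1, (hMt x.1 x.2).1⟩) ?_ ?_
    · intro x _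
      simp only [Finset.coe_filter, Finset.mem_univ, true_and, Set.mem_setOf_eq]
      exact Subtype.ext (hMt x.1 x.2).2
    · intro x _ y _ hxy
      exact Subtype.ext (congrArg (fun a : AddSubgroup.zmultiples t => (a : B)) hxy)
  have hMc : (Nat.card M).factorization p < 2 := by
    have h0 : Nat.card M ≠ 0 := Nat.card_pos.ne'
    by_contra hc
    push Not at hc
    have h2 := Nat.le_of_dvd (Nat.pos_of_ne_zero h0) ((hp.pow_dvd_iff_le_factorization h0).2 hc)
    have := hp.two_le
    nlinarith
  omega

/-- Abstract additive data of the quotient. -/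
structure QData (p N m : ℕ) {U Q : Type} [AddCommGroup U] [AddCommGroup Q] (g : U →+ Q)
    (t : Q) (z : U) : Prop where
  gen : ∀ q : Q, ∃ u : U, ∃ k : ℤ, q = g u + k • t
  rel : p ^ (N - m) • t = g z
  zer : ∀ (u : U) (k : ℤ), g u + k • t = 0 →
    ∃ j : ℤ, u = -(j • z) ∧ ((p : ℤ) ^ N) ∣ k - j * (p : ℤ) ^ (N - m)

section
variable {p N m : ℕ} {U Q : Type} [AddCommGroup U] [AddCommGroup Q] {g : U →+ Q}
    {t : Q} {z : U}

lemma QData.dvd_of_smul (h : QData p N m g t z) (hmN : m ≤ N)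
    (hz : addOrderOf z = p ^ m) (k : ℤ) (hk : k • t = 0) : ((p : ℤ) ^ N) ∣ k := by
  obtain ⟨j, hj, hd⟩ := h.zer 0 k (by simpa using hk)
  have hj' : j • z = 0 := by simpa using hj.symm
  have h1 : ((p : ℤ) ^ m) ∣ j := by
    have := addOrderOf_dvd_iff_zsmul_eq_zero.2 hj'
    rw [hz] at this
    exact_mod_cast this
  have h2 : (p : ℤ) ^ N ∣ j * (p : ℤ) ^ (N - m) := by
    have : (p : ℤ) ^ N = p ^ m * p ^ (N - m) := by rw [← pow_add]; congr 1; omega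
    rw [this]
    exact mul_dvd_mul_right h1 _
  exact (dvd_sub_left h2).1 hd

lemma QData.inj (h : QData p N m g t z) (hp : p.Prime) (hmN : m ≤ N)
    (hz : addOrderOf z = p ^ m) : Function.Injective g := by
  rw [injective_iff_map_eq_zero]
  intro u hu
  obtain ⟨j, hj, hd⟩ := h.zer u 0 (by simpa using hu)
  have h1 : (p : ℤ) ^ m ∣ j := by
    have e : (p : ℤ) ^ N = p ^ m * p ^ (N - m) := by rw [← pow_add]; congr 1; omega
    rw [zero_sub, dvd_neg, e] at hd
    exact Int.dvd_of_mul_dvd_mul_right (pow_ne_zero _ (by exact_mod_cast hp.ne_zero)) hd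
  have h2 : j • z = 0 := by
    apply addOrderOf_dvd_iff_zsmul_eq_zero.1
    rw [hz]; exact_mod_cast h1
  rw [hj, h2, neg_zero]

lemma QData.pow_smul_t (h : QData p N m g t z) (hmN : m ≤ N)
    (hz : addOrderOf z = p ^ m) : p ^ N • t = 0 := by
  have e : p ^ N = p ^ m * p ^ (N - m) := by rw [← pow_add]; congr 1; omega
  rw [e, mul_smul, h.rel, ← map_nsmul, ← hz, addOrderOf_nsmul_eq_zero, map_zero]

lemma QData.order_t (h : QData p N m g t z) (hmN : m ≤ N)
    (hz : addOrderOf z = p ^ m) : addOrderOf t = p ^ N := by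
  apply Nat.dvd_antisymm
  · exact addOrderOf_dvd_of_nsmul_eq_zero (h.pow_smul_t hmN hz)
  · have := h.dvd_of_smul hmN hz (addOrderOf t : ℤ) (by
      rw [natCast_zsmul]; exact addOrderOf_nsmul_eq_zero t)
    exact_mod_cast this

lemma QData.exponent (h : QData p N m g t z) (hmN : m ≤ N)
    (hz : addOrderOf z = p ^ m) (hU : ∀ u : U, p ^ m • u = 0) :
    AddMonoid.exponent Q = p ^ N := by
  apply Nat.dvd_antisymm
  · apply AddMonoid.exponent_dvd_of_forall_nsmul_eq_zero
    intro q
    obtain ⟨u, k, rfl⟩ := h.gen q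
    have hu : p ^ N • u = 0 := by
      rw [← Nat.sub_add_cancel hmN, pow_add, mul_smul, hU, smul_zero]
    rw [smul_add, ← map_nsmul, hu, map_zero, smul_comm, h.pow_smul_t hmN hz, smul_zero, add_zero]
  · rw [← h.order_t hmN hz]
    exact AddMonoid.addOrder_dvd_exponent t

lemma QData.range (h : QData p N m g t z) (hp : p.Prime) (hmN : m ≤ N)
    (hz : addOrderOf z = p ^ m) (hU : ∀ u : U, p ^ m • u = 0) :
    g.range = aOmega p Q m := by
  ext x
  rw [mem_aOmega_iff]
  constructor
  · rintro ⟨u, rfl⟩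
    rw [← map_nsmul, hU, map_zero]
  · intro hx
    obtain ⟨u, k, rfl⟩ := h.gen x
    rw [smul_add, ← map_nsmul, hU, map_zero, zero_add, ← natCast_zsmul, ← mul_smul] at hx
    have hd := h.dvd_of_smul hmN hz _ hx
    have e : (p : ℤ) ^ N = p ^ m * p ^ (N - m) := by rw [← pow_add]; congr 1; omega
    rw [e, Nat.cast_pow] at hd
    obtain ⟨d, rfl⟩ := Int.dvd_of_mul_dvd_mul_left
      (pow_ne_zero _ (by exact_mod_cast hp.ne_zero)) hd
    refine ⟨u + d • z, ?_⟩
    rw [map_add, map_zsmul, ← h.rel, mul_comm, mul_smul, ← Nat.cast_pow, natCast_zsmul]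

lemma QData.mu_two [Finite Q] (h : QData p N m g t z) (hp : p.Prime) (hmN : m ≤ N)
    (hz : addOrderOf z = p ^ m) (hU : ∀ u : U, p ^ m • u = 0) :
    aMuInv p Q 2 = aMuInv p U 2 := by
  have key : ∀ i : ℕ, (1 ≤ i ∧ 2 ≤ aOmegaInv p Q i) ↔ (1 ≤ i ∧ 2 ≤ aOmegaInv p U i) := by
    intro i
    by_cases him : i ≤ m
    · rw [aOmegaInv_eq_of_le p g (h.inj hp hmN hz) i m him (h.range hp hmN hz hU).ge]
    · push Not at him
      have hz0 : ∀ j, m ≤ j → ∀ u : U, p ^ j • u = 0 := by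
        intro j hj u
        rw [← Nat.sub_add_cancel hj, pow_add, mul_smul, hU, smul_zero]
      have h1 : aOmegaInv p Q i ≤ 1 := by
        apply aOmegaInv_le_one p hp t i (by omega)
        intro q
        obtain ⟨u, k, rfl⟩ := h.gen q
        rw [smul_add, ← map_nsmul, hz0 _ (by omega), map_zero, zero_add]
        exact nsmul_mem (zsmul_mem (AddSubgroup.mem_zmultiples t) _) _
      have h2 : aOmegaInv p U i ≤ 1 := by
        have ht : ∀ j, m ≤ j → aOmega p U j = ⊤ := by
          intro j hj
          ext u
          simp [mem_aOmega_iff, hz0 j hj u]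
        unfold aOmegaInv
        rw [ht i (by omega), ht (i-1) (by omega)]
        simp
      omega
  unfold aMuInv
  exact Nat.card_congr (Equiv.subtypeEquivRight key)

end

section nilp

lemma lieLCS_surj {S Q : Type} [LieRing S] [LieRing Q] (π : S →+ Q)
    (hs : Function.Surjective π) (hl : ∀ x y, π ⁅x, y⁆ = ⁅π x, π y⁆) (k : ℕ) :
    lieLCS Q k ≤ (lieLCS S k).map π := by
  induction k with
  | zero =>
    intro x _
    obtain ⟨y, rfl⟩ := hs x
    exact ⟨y, trivial, rfl⟩
  | succ k ih =>
    refine (AddSubgroup.closure_le _).2 ?_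
    rintro _ ⟨y, hy, q, rfl⟩
    obtain ⟨y', hy', rfl⟩ := ih hy
    obtain ⟨q', rfl⟩ := hs q
    exact ⟨⁅y', q'⁆, AddSubgroup.subset_closure ⟨y', hy', q', rfl⟩, hl _ _⟩

lemma lieLCS_anti {L : Type} [LieRing L] (k : ℕ) : lieLCS L (k+1) ≤ lieLCS L k := by
  induction k with
  | zero => exact le_top
  | succ k ih =>
    refine (AddSubgroup.closure_le _).2 ?_
    rintro _ ⟨y, hy, q, rfl⟩
    exact AddSubgroup.subset_closure ⟨y, ih hy, q, rfl⟩

lemma lieLCS_der {L : Type} [LieRing L] (D : LieDerivation ℤ L L) (k : ℕ) :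
    ∀ x ∈ lieLCS L k, D x ∈ lieLCS L k := by
  induction k with
  | zero => intro x _; trivial
  | succ k ih =>
    intro x hx
    change x ∈ AddSubgroup.closure _ at hx
    induction hx using AddSubgroup.closure_induction with
    | mem x hx =>
      obtain ⟨y, hy, q, rfl⟩ := hx
      rw [LieDerivation.apply_lie_eq_add]
      exact add_mem (AddSubgroup.subset_closure ⟨y, hy, _, rfl⟩)
        (AddSubgroup.subset_closure ⟨_, ih y hy, _, rfl⟩)
    | zero => rw [map_zero]; exact zero_mem _
    | add x y _ _ hx hy => rw [map_add]; exact add_mem hx hy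
    | neg x _ hx => rw [map_neg]; exact neg_mem hx

namespace LieSD
variable {L : Type} {m : ℕ} [LieRing L] {θ : ZMod m →ₗ⁅ℤ⁆ LieDerivation ℤ L L}

lemma lie_eq (a b : LieSD L m θ) : ⁅a, b⁆ =
    ⟨⁅a.fst, b.fst⁆ + (θ b.snd) a.fst - (θ a.snd) b.fst, ⁅a.snd, b.snd⁆⟩ := rfl

lemma lie_eq' (a b : LieSD L m θ) : ⁅a, b⁆ =
    ⟨⁅a.fst, b.fst⁆ + (θ b.snd) a.fst - (θ a.snd) b.fst, 0⟩ := by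
  rw [lie_eq]
  congr 1
  simp [Ring.lie_def, mul_comm]

/-- First inclusion. -/
def inl (θ : ZMod m →ₗ⁅ℤ⁆ LieDerivation ℤ L L) : L →+ LieSD L m θ where
  toFun x := ⟨x, 0⟩
  map_zero' := rfl
  map_add' x y := by apply LieSD.ext <;> simp

/-- Second inclusion. -/
def inr (θ : ZMod m →ₗ⁅ℤ⁆ LieDerivation ℤ L L) : ZMod m →+ LieSD L m θ where
  toFun x := ⟨0, x⟩
  map_zero' := rfl
  map_add' x y := by apply LieSD.ext <;> simp

/-- First projection. -/
def pfst (θ : ZMod m →ₗ⁅ℤ⁆ LieDerivation ℤ L L) : LieSD L m θ →+ L where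
  toFun x := x.fst
  map_zero' := rfl
  map_add' x y := rfl

/-- Second projection. -/
def psnd (θ : ZMod m →ₗ⁅ℤ⁆ LieDerivation ℤ L L) : LieSD L m θ →+ ZMod m where
  toFun x := x.snd
  map_zero' := rfl
  map_add' x y := rfl

lemma inl_fst (x : L) : (inl θ x).fst = x := rfl
lemma inl_snd (x : L) : (inl θ x).snd = 0 := rfl
lemma inr_fst (x : ZMod m) : (inr θ x).fst = 0 := rfl
lemma inr_snd (x : ZMod m) : (inr θ x).snd = x := rfl

lemma zsmul_fst (k : ℤ) (a : LieSD L m θ) : (k • a).fst = k • a.fst := map_zsmul (pfst θ) k a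
lemma zsmul_snd (k : ℤ) (a : LieSD L m θ) : (k • a).snd = k • a.snd := map_zsmul (psnd θ) k a
lemma nsmul_fst (k : ℕ) (a : LieSD L m θ) : (k • a).fst = k • a.fst := map_nsmul (pfst θ) k a
lemma nsmul_snd (k : ℕ) (a : LieSD L m θ) : (k • a).snd = k • a.snd := map_nsmul (psnd θ) k a

lemma theta_zsmul (k : ℤ) (c : ZMod m) (x : L) : θ (k • c) x = k • θ c x := by
  have : θ (k • c) = k • θ c := by rw [← LieHom.coe_toLinearMap, map_zsmul]
  rw [this]; rfl

lemma nilp_step (w : ZMod m) (hw : ∀ c : ZMod m, ∃ k : ℤ, c = k • w) (j r : ℕ)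
    (hr : lieLCS (LieSD L m θ) r ≤ (lieLCS L j).map (inl θ)) (i : ℕ) :
    lieLCS (LieSD L m θ) (r + i) ≤ (lieLCS L (j+1) ⊔
      (lieLCS L j).map (((θ w).toLinearMap : Module.End ℤ L) ^ i).toAddMonoidHom).map (inl θ) := by
  have hD : ∀ i : ℕ, ∀ x ∈ lieLCS L j,
      (((θ w).toLinearMap : Module.End ℤ L) ^ i) x ∈ lieLCS L j := by
    intro i
    induction i with
    | zero => intro x hx; simpa using hx
    | succ i ih =>
      intro x hx
      rw [pow_succ', Module.End.mul_apply]
      exact lieLCS_der (θ w) j _ (ih x hx)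
  induction i with
  | zero =>
    refine hr.trans (AddSubgroup.map_mono (le_trans ?_ le_sup_right))
    intro x hx
    exact ⟨x, hx, by simp⟩
  | succ i ih =>
    refine (AddSubgroup.closure_le _).2 ?_
    rintro _ ⟨y, hy, q, rfl⟩
    obtain ⟨y', hy', rfl⟩ := ih hy
    obtain ⟨a, ha, _, ⟨b, hb, rfl⟩, rfl⟩ := AddSubgroup.mem_sup.1 hy'
    obtain ⟨k, hk⟩ := hw q.snd
    set E := ((θ w).toLinearMap : Module.End ℤ L) with hE
    refine ⟨⁅a + (E ^ i) b, q.fst⁆ + (k • θ w a + k • (E ^ (i+1)) b), ?_, ?_⟩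
    · have h1 : ⁅a + (E ^ i) b, q.fst⁆ ∈ lieLCS L (j+1) :=
        AddSubgroup.subset_closure ⟨_, add_mem (lieLCS_anti j ha) (hD i b hb), _, rfl⟩
      refine add_mem (AddSubgroup.mem_sup_left h1) (add_mem (AddSubgroup.mem_sup_left ?_)
        (AddSubgroup.mem_sup_right ?_))
      · exact zsmul_mem (lieLCS_der (θ w) (j+1) a ha) k
      · exact zsmul_mem (AddSubgroup.mem_map_of_mem (E ^ (i+1)).toAddMonoidHom hb) k
    · rw [lie_eq']
      apply LieSD.ext
      · show _ = ⁅a + (E ^ i) b, q.fst⁆ + θ q.snd (a + (E ^ i) b) - θ 0 q.fst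
        rw [inl_fst, hk, theta_zsmul, theta_zero, map_add (θ w), smul_add, pow_succ',
          Module.End.mul_apply]
        simp [hE]
      · rfl

lemma nilp (w : ZMod m) (hw : ∀ c : ZMod m, ∃ k : ℤ, c = k • w)
    (hL : IsNilpotentLieRing L) (hk : ∃ k : ℕ, ((θ w).toLinearMap : Module.End ℤ L) ^ k = 0) :
    IsNilpotentLieRing (LieSD L m θ) := by
  obtain ⟨c, hc⟩ := hL
  obtain ⟨k, hk⟩ := hk
  have key : ∀ j, ∃ r, lieLCS (LieSD L m θ) r ≤ (lieLCS L j).map (inl θ) := by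
    intro j
    induction j with
    | zero =>
      refine ⟨1, (AddSubgroup.closure_le _).2 ?_⟩
      rintro _ ⟨y, hy, q, rfl⟩
      rw [lie_eq']
      exact ⟨_, trivial, rfl⟩
    | succ j ih =>
      obtain ⟨r, hr⟩ := ih
      refine ⟨r + k, (nilp_step w hw j r hr k).trans (AddSubgroup.map_mono ?_)⟩
      rw [hk]
      refine sup_le le_rfl ?_
      rintro _ ⟨b, hb, rfl⟩
      exact zero_mem _
  obtain ⟨r, hr⟩ := key c
  refine ⟨r, ?_⟩
  rw [hc, AddSubgroup.map_bot] at hr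
  exact le_bot_iff.1 hr

end LieSD
end nilp

lemma generator_zsmul {M : ℕ} (hM : M ≠ 0) (w : ZMod M) (hw : addOrderOf w = M) (c : ZMod M) :
    ∃ k : ℤ, c = k • w := by
  haveI : NeZero M := ⟨hM⟩
  have h : AddSubgroup.zmultiples w = ⊤ := by
    apply AddSubgroup.eq_top_of_card_eq
    rw [Nat.card_zmultiples, hw, Nat.card_zmod]
  have hc : c ∈ AddSubgroup.zmultiples w := by rw [h]; trivial
  obtain ⟨k, hk⟩ := hc
  exact ⟨k, hk.symm⟩

lemma core_qdata (p N m : ℕ) (hp : p.Prime)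
    (U : Type) [LieRing U] (z : U)
    (w : ZMod (p ^ N)) (hw : addOrderOf w = p ^ N)
    (θ : ZMod (p ^ N) →ₗ⁅ℤ⁆ LieDerivation ℤ U U)
    (Q : Type) [AddCommGroup Q] (π : LieSD U (p ^ N) θ →+ Q) (hs : Function.Surjective π)
    (hk : ∀ x, π x = 0 ↔ x ∈ AddSubgroup.zmultiples
      (⟨-z, p ^ (N - m) • w⟩ : LieSD U (p ^ N) θ)) :
    QData p N m (π.comp (LieSD.inl θ)) (π (LieSD.inr θ w)) z := by
  refine ⟨?_, ?_, ?_⟩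
  · intro q
    obtain ⟨x, rfl⟩ := hs q
    obtain ⟨k, hk'⟩ := generator_zsmul (pow_ne_zero _ hp.ne_zero) w hw x.snd
    refine ⟨x.fst, k, ?_⟩
    rw [AddMonoidHom.comp_apply, ← map_zsmul, ← map_zsmul, ← map_add, ← hk']
    congr 1
    apply LieSD.ext <;> simp [LieSD.inl_fst, LieSD.inl_snd, LieSD.inr_fst, LieSD.inr_snd]
  · rw [AddMonoidHom.comp_apply, ← sub_eq_zero, ← map_nsmul, ← map_nsmul, ← map_sub, hk]
    convert AddSubgroup.mem_zmultiples _ using 1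
    rw [sub_eq_add_neg, ← map_neg]
    apply LieSD.ext <;> simp [-map_neg, LieSD.inl_fst, LieSD.inl_snd, LieSD.inr_fst, LieSD.inr_snd]
  · intro u k h
    rw [AddMonoidHom.comp_apply, ← map_zsmul, ← map_zsmul, ← map_add, hk] at h
    obtain ⟨j, hj⟩ := h
    have h1 := congrArg LieSD.fst hj
    have h2 := congrArg LieSD.snd hj
    simp only [LieSD.zsmul_fst, LieSD.zsmul_snd, LieSD.add_fst, LieSD.add_snd] at h1 h2
    refine ⟨j, ?_, ?_⟩
    · simpa [LieSD.inl_fst, LieSD.inl_snd, LieSD.inr_fst, LieSD.inr_snd] using h1.symm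
    · have h3 : (k - j * (p : ℤ) ^ (N - m)) • w = 0 := by
        have h4 : j • (p ^ (N - m) • w) = k • w := by
          simpa [LieSD.inl_fst, LieSD.inl_snd, LieSD.inr_fst, LieSD.inr_snd] using h2
        rw [sub_smul, mul_smul, ← Nat.cast_pow, natCast_zsmul, h4, sub_self]
      have := addOrderOf_dvd_iff_zsmul_eq_zero.2 h3
      rw [hw] at this
      exact_mod_cast this

lemma order_v (p N m : ℕ) (hmN : m ≤ N)
    (U : Type) [LieRing U] (z : U) (hz : addOrderOf z = p ^ m)
    (w : ZMod (p ^ N)) (hw : addOrderOf w = p ^ N)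
    (θ : ZMod (p ^ N) →ₗ⁅ℤ⁆ LieDerivation ℤ U U) :
    addOrderOf (⟨-z, p ^ (N - m) • w⟩ : LieSD U (p ^ N) θ) = p ^ m := by
  apply Nat.dvd_antisymm
  · apply addOrderOf_dvd_of_nsmul_eq_zero
    apply LieSD.ext
    · rw [LieSD.nsmul_fst]
      simp [← hz]
    · rw [LieSD.nsmul_snd]
      show p ^ m • p ^ (N - m) • w = 0
      rw [← mul_smul, ← pow_add, Nat.add_sub_cancel' hmN]
      exact addOrderOf_dvd_iff_nsmul_eq_zero.1 (dvd_of_eq hw)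
  · rw [← hz, ← addOrderOf_neg z]
    exact addOrderOf_map_dvd (LieSD.pfst θ) _

lemma core_card (p f N m : ℕ) (hp : p.Prime) (hmN : m ≤ N)
    (U : Type) [LieRing U] [Finite U] (z : U) (hz : addOrderOf z = p ^ m)
    (hcard : Nat.card U = p ^ (f + m))
    (w : ZMod (p ^ N)) (hw : addOrderOf w = p ^ N)
    (θ : ZMod (p ^ N) →ₗ⁅ℤ⁆ LieDerivation ℤ U U)
    (Q : Type) [AddCommGroup Q] (π : LieSD U (p ^ N) θ →+ Q) (hs : Function.Surjective π)
    (hk : ∀ x, π x = 0 ↔ x ∈ AddSubgroup.zmultiples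
      (⟨-z, p ^ (N - m) • w⟩ : LieSD U (p ^ N) θ)) :
    Nat.card Q = p ^ (f + N) := by
  have hS : Nat.card (LieSD U (p ^ N) θ) = p ^ (f + m) * p ^ N := by
    rw [Nat.card_congr (LieSD.prodEquiv θ), Nat.card_prod, hcard, Nat.card_zmod]
  have hker : π.ker = AddSubgroup.zmultiples (⟨-z, p ^ (N - m) • w⟩ : LieSD U (p ^ N) θ) := by
    ext x; rw [AddMonoidHom.mem_ker, hk]
  have h1 := AddSubgroup.card_mul_index π.ker
  rw [AddSubgroup.index_ker, AddMonoidHom.range_eq_top.2 hs, hS, hker, Nat.card_zmultiples,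
    order_v p N m hmN U z hz w hw θ] at h1
  have h2 : Nat.card (⊤ : AddSubgroup Q) = Nat.card Q := AddSubgroup.card_top
  rw [h2] at h1
  apply Nat.eq_of_mul_eq_mul_left (pow_pos hp.pos m)
  rw [h1, ← pow_add, ← pow_add]
  congr 1
  omega

/-- Let `U` be a Lie ring satisfying P-1 – P-3, `z` a central element of
order `p ^ μ₁(U)`, `n - f ≥ 2μ₁(U)`, `w` a generator of `ℤ/p^(n-f)ℤ` (an abelian Lie ring),
and `θ : (ℤ/p^(n-f)ℤ)w → Der(U)_z` a Lie ring homomorphism.  Then, writing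
`v = p^(n-f-μ₁(U))·w - z` in the semidirect product `U ⋊_θ ℤ/p^(n-f)ℤ`:
(1) the subgroup `⟨v⟩` is an ideal; (2) the quotient `U(n-f,w,wθ,z)` is a Lie ring of order
`p ^ n` with additive coexponent `f`; (3) `μ₂(U(n-f,w,wθ,z)) = μ₁(U)` and
`Ω_{μ₁(U)}(U(n-f,w,wθ,z)) ≅ U`; (4) if `wθ` is nilpotent then so is `U(n-f,w,wθ,z)`. -/
theorem lieSD_quotient_properties
    (p f n : ℕ) (hp : p.Prime) (hf : 1 ≤ f) (hfn : f ≤ n)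
    (U : Type) [LieRing U] [Finite U]
    -- P-1 : `U` is nilpotent, has additive coexponent `f`, and `μ₁(U) = μ₂(U) ≤ f`
    (hnil : IsNilpotentLieRing U)
    (hcoexp : ∃ e : ℕ, AddMonoid.exponent U = p ^ e ∧ (f + aMuInv p U 1) - e = f)
    (hμeq : aMuInv p U 1 = aMuInv p U 2) (hμf : aMuInv p U 1 ≤ f)
    -- P-2 : `|U| = p ^ (f + μ₁(U))`
    (hcard : Nat.card U = p ^ (f + aMuInv p U 1))
    -- P-3 and the choice of `z` : a central element of order `p ^ μ₁(U)`
    (z : U) (hzc : ∀ u : U, ⁅z, u⁆ = 0)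
    (hzo : addOrderOf z = p ^ aMuInv p U 1)
    -- `n - f ≥ 2μ₁(U)`
    (hn : 2 * aMuInv p U 1 ≤ n - f)
    -- `w` a generator of `ℤ/p^(n-f)ℤ`
    (w : ZMod (p ^ (n - f))) (hw : addOrderOf w = p ^ (n - f))
    -- `θ` a Lie ring homomorphism into `Der(U)_z`
    (θ : ZMod (p ^ (n - f)) →ₗ⁅ℤ⁆ LieDerivation ℤ U U)
    (hθz : ∀ c : ZMod (p ^ (n - f)), (θ c) z = 0) :
    let v : LieSD U (p ^ (n - f)) θ := ⟨-z, p ^ (n - f - aMuInv p U 1) • w⟩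
    -- (1) `⟨v⟩` is an ideal of `U ⋊_θ (ℤ/p^(n-f)ℤ)w`
    (∀ b : LieSD U (p ^ (n - f)) θ, ∀ a ∈ AddSubgroup.zmultiples v,
        ⁅a, b⁆ ∈ AddSubgroup.zmultiples v ∧ ⁅b, a⁆ ∈ AddSubgroup.zmultiples v) ∧
    -- and for the corresponding Lie ideal `I`, the quotient `U(n-f,w,wθ,z)` satisfies:
    ∀ I : LieIdeal ℤ (LieSD U (p ^ (n - f)) θ),
      (I : Set (LieSD U (p ^ (n - f)) θ)) =
          (AddSubgroup.zmultiples v : Set (LieSD U (p ^ (n - f)) θ)) →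
      -- (2) it is a Lie ring of order `p ^ n` and additive coexponent `f`
      (Nat.card (LieSD U (p ^ (n - f)) θ ⧸ I) = p ^ n ∧
        (∃ e : ℕ,
          AddMonoid.exponent (LieSD U (p ^ (n - f)) θ ⧸ I) = p ^ e ∧ n - e = f)) ∧
      -- (3) `μ₂` of the quotient is `μ₁(U)`, and `Ω_{μ₁(U)}` of the quotient is
      -- isomorphic to `U` (as a Lie ring)
      (aMuInv p (LieSD U (p ^ (n - f)) θ ⧸ I) 2 = aMuInv p U 1 ∧
        ∃ g : U →+ (LieSD U (p ^ (n - f)) θ ⧸ I),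
          Function.Injective g ∧
          (∀ x y : U, g ⁅x, y⁆ = ⁅g x, g y⁆) ∧
          g.range = aOmega p (LieSD U (p ^ (n - f)) θ ⧸ I) (aMuInv p U 1)) ∧
      -- (4) if `wθ` is nilpotent then the quotient is a nilpotent Lie ring
      ((∃ k : ℕ, ((θ w).toLinearMap : Module.End ℤ U) ^ k = 0) →
        IsNilpotentLieRing (LieSD U (p ^ (n - f)) θ ⧸ I)) := by
  intro v
  have hpm := hp.pos
  have hmN : aMuInv p U 1 ≤ n - f := by omega
  have hU : ∀ u : U, p ^ aMuInv p U 1 • u = 0 := by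
    obtain ⟨e, he, hef⟩ := hcoexp
    have : e = aMuInv p U 1 := by omega
    intro u
    rw [← this, ← he]
    exact AddMonoid.exponent_nsmul_eq_zero u
  have hvc : ∀ b : LieSD U (p ^ (n - f)) θ, ⁅v, b⁆ = 0 := by
    intro b
    rw [LieSD.lie_eq']
    apply LieSD.ext
    · show ⁅-z, b.fst⁆ + θ b.snd (-z) - θ (p ^ (n - f - aMuInv p U 1) • w) b.fst = 0
      rw [neg_lie, hzc, map_neg, hθz, ← natCast_zsmul, LieSD.theta_zsmul]
      have : p ^ (n - f - aMuInv p U 1) • (θ w) b.fst = 0 := by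
        have hle : aMuInv p U 1 ≤ n - f - aMuInv p U 1 := by omega
        rw [← Nat.sub_add_cancel hle, pow_add, mul_smul, hU, smul_zero]
      rw [natCast_zsmul, this]
      simp
    · rfl
  refine ⟨?_, ?_⟩
  · rintro b _ ⟨k, rfl⟩
    have h1 : ⁅k • v, b⁆ = 0 := by rw [zsmul_lie, hvc, smul_zero]
    have h2 : ⁅b, k • v⁆ = 0 := by rw [← lie_skew, h1, neg_zero]
    simp only [h1, h2]
    exact ⟨zero_mem _, zero_mem _⟩
  intro I hI
  let π : LieSD U (p ^ (n - f)) θ →+ (LieSD U (p ^ (n - f)) θ ⧸ I) :=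
    (LieSubmodule.Quotient.mk' I : _ →ₗ[ℤ] _).toAddMonoidHom
  have hs : Function.Surjective π := LieSubmodule.Quotient.surjective_mk' I
  have hl : ∀ x y, π ⁅x, y⁆ = ⁅π x, π y⁆ := fun x y => LieSubmodule.Quotient.mk_bracket I x y
  have hk : ∀ x, π x = 0 ↔ x ∈ AddSubgroup.zmultiples v := by
    intro x
    have h1 : π x = 0 ↔ x ∈ I := LieSubmodule.Quotient.mk_eq_zero I
    rw [h1]
    exact Set.ext_iff.1 hI x
  have hc := core_card p f (n - f) _ hp hmN U z hzo hcard w hw θ _ π hs hk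
  have hq := core_qdata p (n - f) _ hp U z w hw θ _ π hs hk
  haveI : Finite (LieSD U (p ^ (n - f)) θ ⧸ I) := by
    apply Nat.finite_of_card_ne_zero
    rw [hc]
    exact pow_ne_zero _ hp.ne_zero
  refine ⟨⟨?_, n - f, hq.exponent hmN hzo hU, by omega⟩, ⟨?_, _, hq.inj hp hmN hzo, ?_,
    hq.range hp hmN hzo hU⟩, ?_⟩
  · rw [hc]; congr 1; omega
  · exact (hq.mu_two hp hmN hzo hU).trans hμeq.symm
  · intro x y
    rw [AddMonoidHom.comp_apply, AddMonoidHom.comp_apply, AddMonoidHom.comp_apply, ← hl,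
      LieSD.lie_eq']
    congr 1
    apply LieSD.ext <;> simp [LieSD.inl_fst, LieSD.inl_snd, LieSD.theta_zero]
  · intro hnw
    obtain ⟨c, hc⟩ := LieSD.nilp w (generator_zsmul (pow_ne_zero _ hp.ne_zero) w hw) hnil hnw
    refine ⟨c, ?_⟩
    have := lieLCS_surj π hs hl c
    rw [hc, AddSubgroup.map_bot] at this
    exact le_bot_iff.1 this
end

section
/- Let p be a prime, f a positive integer, and let U be a Lie ring satisfying: (P-1) U is nilpotent, has additive coexponent f, and μ_1(U) = μ_2(U) ≤ f; (P-2) |U| = p^{f + μ_1(U)}; (P-3) U possesses a central element of order p^{μ_1(U)}. Let n - f ≥ 2μ_1(U), let z, z' be central elements of U of order p^{μ_1(U)}, let w, w' be generators of ℤ/p^{n-f}ℤ, and let θ, θ' be Lie ring homomorphisms from (ℤ/p^{n-f}ℤ)w and (ℤ/p^{n-f}ℤ)w' into Der(U)_z and Der(U)_{z'} respectively. Then U(n-f, w, wθ, z) ≅ U(n-f, w', w'θ', z') if and only if there exists a Lie ring automorphism π of U such that (1) zπ = α z' for some integer α coprime to p, and (2) π^{-1}(wθ)π = ad_r x + α(w'θ')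 for some x ∈ U. -/
attribute [local instance 100] LieRing.ofAssociativeRing

/-- `Q` is presented as `U + ℤ W`. -/
structure LPres (U : Type) [LieRing U] (P : ℤ) (z : U) (D : U → U)
    (Q : Type) [LieRing Q] (i : U →+ Q) (W : Q) : Prop where
  lie : ∀ u v, i ⁅u, v⁆ = ⁅i u, i v⁆
  act : ∀ u, ⁅i u, W⁆ = i (D u)
  surj : ∀ q, ∃ (u : U) (k : ℤ), q = i u + k • W
  rel : P • W = i z
  ker : ∀ (u : U) (k : ℤ), i u + k • W = 0 → ∃ j : ℤ, k = P * j ∧ u = -(j • z)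

namespace LPres

variable {U : Type} [LieRing U] {P : ℤ} {z z' : U} {D D' : U → U}
  {Q : Type} [LieRing Q] {i : U →+ Q} {W : Q}
  {Q' : Type} [LieRing Q'] {i' : U →+ Q'} {W' : Q'}

theorem inj (h : LPres U P z D Q i W) (hP : P ≠ 0) : Function.Injective i := by
  rw [injective_iff_map_eq_zero]
  intro u hu
  obtain ⟨j, hj, hu'⟩ := h.ker u 0 (by simp [hu])
  have : j = 0 := by
    rcases mul_eq_zero.mp hj.symm with h1 | h1
    · exact absurd h1 hP
    · exact h1
  simp [hu', this]

def gen (i : U →+ Q) (W : Q) : U × ℤ →+ Q :=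
  i.coprod (zmultiplesHom Q W)

theorem gen_apply (i : U →+ Q) (W : Q) (a : U × ℤ) : gen i W a = i a.1 + a.2 • W := by
  simp [gen]

theorem gen_surj (h : LPres U P z D Q i W) : Function.Surjective (gen i W) := by
  intro q
  obtain ⟨u, k, hq⟩ := h.surj q
  exact ⟨(u, k), by rw [gen_apply, hq]⟩

theorem gen_ker (h : LPres U P z D Q i W) (a : U × ℤ) :
    gen i W a = 0 ↔ ∃ j : ℤ, a.2 = P * j ∧ a.1 = -(j • z) := by
  rw [gen_apply]
  constructor
  · exact h.ker _ _
  · rintro ⟨j, h1, h2⟩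
    rw [h1, h2, mul_comm, mul_smul, h.rel]
    simp

theorem gen_lie (h : LPres U P z D Q i W) (a b : U × ℤ) :
    ⁅gen i W a, gen i W b⁆ = gen i W (⁅a.1, b.1⁆ + b.2 • D a.1 - a.2 • D b.1, 0) := by
  simp only [gen_apply, add_lie, lie_add, lie_zsmul, zsmul_lie, h.act, lie_self, smul_zero,
    zero_smul, add_zero, map_add, map_sub, map_zsmul, h.lie]
  rw [← lie_skew W (i b.1), h.act]
  simp only [smul_neg]
  abel

theorem iso (h : LPres U P z D Q i W) (h' : LPres U P z D Q' i' W') :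
    ∃ e : Q ≃+ Q', ∀ a b : Q, e ⁅a, b⁆ = ⁅e a, e b⁆ := by
  have hk : (gen i W).ker = (gen i' W').ker := by
    ext a
    rw [AddMonoidHom.mem_ker, AddMonoidHom.mem_ker, h.gen_ker, h'.gen_ker]
  let e : Q ≃+ Q' := (QuotientAddGroup.quotientKerEquivOfSurjective _ h.gen_surj).symm.trans
    ((QuotientAddGroup.quotientAddEquivOfEq hk).trans
      (QuotientAddGroup.quotientKerEquivOfSurjective _ h'.gen_surj))
  have he : ∀ a, e (gen i W a) = gen i' W' a := by
    intro a
    have : gen i W a = QuotientAddGroup.quotientKerEquivOfSurjective _ h.gen_surj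
      (QuotientAddGroup.mk a) := rfl
    simp only [e, AddEquiv.trans_apply]
    rw [this, AddEquiv.symm_apply_apply]
    rfl
  refine ⟨e, fun a b => ?_⟩
  obtain ⟨a, rfl⟩ := h.gen_surj a
  obtain ⟨b, rfl⟩ := h.gen_surj b
  rw [h.gen_lie, he, he, he, h'.gen_lie]

theorem twist (h' : LPres U P z' D' Q' i' W') (R : ℤ) (hP0 : P ≠ 0)
    (hR : ∀ u : U, R • u = 0) (hRP : R ∣ P)
    (π : U ≃+ U) (hπ : ∀ x y : U, π ⁅x, y⁆ = ⁅π x, π y⁆) (α : ℤ) (hα : IsCoprime α (P * R))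
    (hz : π z = α • z') (x : U)
    (hx : ∀ u : U, π (D (π.symm u)) = ⁅u, x⁆ + α • D' u) :
    LPres U P z D Q' (i'.comp π.toAddMonoidHom) (α • W' + i' x) := by
  have hP : ∀ u : U, P • u = 0 := by
    intro u
    obtain ⟨c, rfl⟩ := hRP
    rw [mul_comm, mul_smul, hR, smul_zero]
  refine ⟨?_, ?_, ?_, ?_, ?_⟩
  · intro u v
    simp [hπ, h'.lie]
  · intro u
    have := hx (π u)
    simp only [AddEquiv.symm_apply_apply] at this
    simp [this, h'.act, h'.lie, add_comm]
  · intro q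
    obtain ⟨u, k, rfl⟩ := h'.surj q
    obtain ⟨β, γ, hb⟩ := hα
    have hW : W' = (β * α) • W' := by
      have h1 : W' = (β * α + γ * (P * R)) • W' := by rw [hb, one_smul]
      have h2 : (γ * (P * R)) • W' = 0 := by
        rw [mul_comm P R, mul_smul, mul_smul, h'.rel, ← map_zsmul, hR]
        simp
      rw [add_smul, h2, add_zero] at h1
      exact h1
    refine ⟨π.symm (u - (k * β) • x), k * β, ?_⟩
    conv_lhs => rw [hW]
    simp [smul_smul, mul_assoc]
  · simp only [smul_add, AddMonoidHom.coe_comp, Function.comp_apply]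
    rw [smul_comm, h'.rel, ← map_zsmul i' P x, hP]
    simp [hz]
  · intro u k hk
    have h1 : i' (π u + k • x) + (k * α) • W' = 0 := by
      rw [← hk]
      simp [smul_smul]
      abel
    obtain ⟨j, hj, hu⟩ := h'.ker _ _ h1
    have hc : IsCoprime P α := (hα.of_mul_right_left).symm
    obtain ⟨t, rfl⟩ : P ∣ k := hc.dvd_of_dvd_mul_right ⟨j, hj⟩
    refine ⟨t, rfl, ?_⟩
    have hj' : j = t * α := by
      have : P * (t * α) = P * j := by rw [← hj]; ring
      exact (mul_left_cancel₀ hP0 this).symm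
    apply π.injective
    rw [mul_comm, mul_smul, hP, smul_zero, add_zero] at hu
    rw [hu, hj', map_neg, map_zsmul, hz, mul_smul]

theorem conv (h : LPres U P z D Q i W) (h' : LPres U P z' D' Q' i' W') (R : ℤ) (hR0 : R ≠ 0)
    (hP0 : P ≠ 0)
    (hR : ∀ u : U, R • u = 0) (hRP : R ∣ P) (hzR : ∀ k : ℤ, k • z = 0 → R ∣ k)
    (hzR' : ∀ k : ℤ, k • z' = 0 → R ∣ k) 
    (e : Q ≃+ Q') (he : ∀ a b : Q, e ⁅a, b⁆ = ⁅e a, e b⁆) :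
    ∃ π : U ≃+ U, (∀ x y : U, π ⁅x, y⁆ = ⁅π x, π y⁆) ∧
        ∃ α : ℤ, π z = α • z' ∧
          ∃ x : U, ∀ u : U, π (D (π.symm u)) = ⁅u, x⁆ + α • (D' u) := by
  -- the `R`-torsion of `Q` is the image of `i`
  have tors : ∀ {z : U} {D : U → U} {Q : Type} [LieRing Q] {i : U →+ Q} {W : Q},
      LPres U P z D Q i W → (∀ k : ℤ, k • z = 0 → R ∣ k) → ∀ q : Q, R • q = 0 → ∃ u, q = i u := by
    intro z D Q _ i W h hzR q hq
    obtain ⟨u, k, rfl⟩ := h.surj q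
    rw [smul_add, ← map_zsmul, hR, smul_smul] at hq
    obtain ⟨j, hj, hz⟩ := h.ker 0 (R * k) (by simpa using hq)
    obtain ⟨s, rfl⟩ := hzR j (by rw [eq_comm, neg_eq_zero] at hz; exact hz)
    have hk : k = s * P := mul_left_cancel₀ hR0 (by rw [hj]; ring)
    refine ⟨u + s • z, ?_⟩
    rw [hk, mul_smul, h.rel]
    simp
  have h1 : ∀ u, ∃ v, e (i u) = i' v := fun u => tors h' hzR' _ (by
    rw [← map_zsmul, ← map_zsmul, hR]; simp)
  have h2 : ∀ v, ∃ u, e.symm (i' v) = i u := fun u => tors h hzR _ (by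
    rw [← map_zsmul, ← map_zsmul, hR]; simp)
  choose g hg using h1
  choose g' hg' using h2
  have ii := h.inj hP0
  have ii' := h'.inj hP0
  let π : U ≃+ U :=
    { toFun := g
      invFun := g'
      left_inv := fun u => ii (by rw [← hg', ← hg]; simp)
      right_inv := fun u => ii' (by rw [← hg, ← hg']; simp)
      map_add' := fun a b => ii' (by rw [← hg, map_add, map_add, map_add, hg, hg]) }
  have hπ : ∀ u, e (i u) = i' (π u) := hg
  obtain ⟨x, α, hW⟩ := h'.surj (e W)
  refine ⟨π, ?_, α, ?_, x, ?_⟩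
  · intro a b
    apply ii'
    rw [← hπ, h.lie, he, hπ, hπ, h'.lie]
  · apply ii'
    rw [← hπ, ← h.rel, map_zsmul, hW, smul_add, ← map_zsmul]
    obtain ⟨c, rfl⟩ := hRP
    rw [mul_comm R c, mul_smul, hR, smul_zero, map_zero, zero_add, smul_comm, ← mul_comm R c,
      h'.rel, map_zsmul]
  · intro u
    obtain ⟨v, rfl⟩ := π.surjective u
    apply ii'
    rw [AddEquiv.symm_apply_apply, ← hπ, ← h.act, he, hW, hπ, lie_add, ← h'.lie, lie_zsmul,
      h'.act, map_add, map_zsmul]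

end LPres

theorem LieSD.zsmul_fst_s11 {L : Type} {m : ℕ} [LieRing L] {θ : ZMod m →ₗ⁅ℤ⁆ LieDerivation ℤ L L}
    (k : ℤ) (a : LieSD L m θ) : (k • a).fst = k • a.fst :=
  map_zsmul (⟨⟨LieSD.fst, rfl⟩, fun _ _ => rfl⟩ : LieSD L m θ →+ L) k a

theorem LieSD.zsmul_snd_s11 {L : Type} {m : ℕ} [LieRing L] {θ : ZMod m →ₗ⁅ℤ⁆ LieDerivation ℤ L L}
    (k : ℤ) (a : LieSD L m θ) : (k • a).snd = k • a.snd :=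
  map_zsmul (⟨⟨LieSD.snd, rfl⟩, fun _ _ => rfl⟩ : LieSD L m θ →+ ZMod m) k a

theorem LieSD.bracket_def {L : Type} {m : ℕ} [LieRing L]
    {θ : ZMod m →ₗ⁅ℤ⁆ LieDerivation ℤ L L} (a b : LieSD L m θ) :
    ⁅a, b⁆ = ⟨⁅a.fst, b.fst⁆ + (θ b.snd) a.fst - (θ a.snd) b.fst, ⁅a.snd, b.snd⁆⟩ := rfl

/-- The embedding of `U` in the quotient. -/
def sdIn {U : Type} [LieRing U] {M : ℕ} (θ : ZMod M →ₗ⁅ℤ⁆ LieDerivation ℤ U U)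
    (I : LieIdeal ℤ (LieSD U M θ)) : U →+ (LieSD U M θ ⧸ I) where
  toFun u := LieSubmodule.Quotient.mk (⟨u, 0⟩ : LieSD U M θ)
  map_zero' := rfl
  map_add' a b := by
    have : (⟨a + b, 0⟩ : LieSD U M θ) = ⟨a, 0⟩ + ⟨b, 0⟩ := by ext <;> simp
    rw [this]; rfl

theorem sd_pres {U : Type} [LieRing U] (p m N : ℕ) (hp : p.Prime) (hmN : m ≤ N)
    (z : U) (hzo : addOrderOf z = p ^ m)
    (w : ZMod (p ^ N)) (hw : addOrderOf w = p ^ N)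
    (θ : ZMod (p ^ N) →ₗ⁅ℤ⁆ LieDerivation ℤ U U)
    (I : LieIdeal ℤ (LieSD U (p ^ N) θ))
    (hI : (I : Set (LieSD U (p ^ N) θ)) =
      (AddSubgroup.zmultiples
        (⟨-z, p ^ (N - m) • w⟩ : LieSD U (p ^ N) θ) :
          Set (LieSD U (p ^ N) θ))) :
    LPres U ((p : ℤ) ^ (N - m)) z (θ w) (LieSD U (p ^ N) θ ⧸ I) (sdIn θ I)
      (LieSubmodule.Quotient.mk (⟨0, w⟩ : LieSD U (p ^ N) θ)) := by
  have hgen : ∀ c : ZMod (p ^ N), ∃ k : ℤ, k • w = c := by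
    intro c
    have : NeZero (p ^ N) := ⟨pow_ne_zero _ hp.ne_zero⟩
    have h : AddSubgroup.zmultiples w = ⊤ := by
      rw [← AddSubgroup.card_eq_iff_eq_top, Nat.card_zmultiples, hw, Nat.card_zmod]
    have := h ▸ AddSubgroup.mem_top c
    exact AddSubgroup.mem_zmultiples_iff.mp this
  have hmem : ∀ a : LieSD U (p ^ N) θ, a ∈ I ↔
      ∃ k : ℤ, k • (⟨-z, p ^ (N - m) • w⟩ : LieSD U (p ^ N) θ) = a := by
    intro a
    rw [← SetLike.mem_coe, hI]
    exact AddSubgroup.mem_zmultiples_iff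
  have mk0 : ∀ a : LieSD U (p ^ N) θ, (LieSubmodule.Quotient.mk a : LieSD U (p ^ N) θ ⧸ I) = 0 ↔
      a ∈ I := fun a => LieSubmodule.Quotient.mk_eq_zero'
  have mkz : ∀ (k : ℤ) (a : LieSD U (p ^ N) θ),
    k • (LieSubmodule.Quotient.mk a : LieSD U (p ^ N) θ ⧸ I) = LieSubmodule.Quotient.mk (k • a) :=
    fun _ _ => rfl
  have mka : ∀ (b a : LieSD U (p ^ N) θ),
    (LieSubmodule.Quotient.mk b : LieSD U (p ^ N) θ ⧸ I) + LieSubmodule.Quotient.mk a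
      = LieSubmodule.Quotient.mk (b + a) :=
    fun _ _ => rfl
  have hin : ∀ u, sdIn θ I u = LieSubmodule.Quotient.mk (⟨u, 0⟩ : LieSD U (p ^ N) θ) :=
    fun _ => rfl
  have hW : ∀ k : ℤ, k • (⟨0, w⟩ : LieSD U (p ^ N) θ) = ⟨0, k • w⟩ := by
    intro k
    ext
    · rw [LieSD.zsmul_fst_s11]; simp
    · rw [LieSD.zsmul_snd_s11]
  refine ⟨?_, ?_, ?_, ?_, ?_⟩
  · intro u v
    rw [hin, hin, hin, ← LieSubmodule.Quotient.mk_bracket, LieSD.bracket_def]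
    simp [LieSD.theta_zero]
  · intro u
    rw [hin, hin, ← LieSubmodule.Quotient.mk_bracket, LieSD.bracket_def]
    simp [LieSD.theta_zero]
  · intro q
    obtain ⟨⟨u, c⟩, rfl⟩ := LieSubmodule.Quotient.surjective_mk' I q
    obtain ⟨k, rfl⟩ := hgen c
    refine ⟨u, k, ?_⟩
    rw [hin, mkz, mka, hW]
    change LieSubmodule.Quotient.mk _ = _
    congr 1
    ext <;> simp
  · rw [hin, mkz, hW, ← sub_eq_zero]
    refine (mk0 (_ - _)).mpr ((hmem _).mpr ⟨1, ?_⟩)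
    rw [one_smul, eq_sub_iff_add_eq]
    ext
    · simp
    · simp
  · intro u k hk
    rw [hin, mkz, mka, hW, mk0, hmem] at hk
    obtain ⟨j, hj⟩ := hk
    have h1 := congrArg LieSD.fst hj
    have h2 := congrArg LieSD.snd hj
    rw [LieSD.zsmul_fst_s11] at h1
    rw [LieSD.zsmul_snd_s11] at h2
    simp only [LieSD.add_fst, LieSD.add_snd, add_zero, zero_add] at h1 h2
    have h3 : (k - (p : ℤ) ^ (N - m) * j) • w = 0 := by
      rw [sub_smul, ← h2, mul_comm, mul_smul, sub_eq_zero, ← Nat.cast_pow, natCast_zsmul]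
    rw [← addOrderOf_dvd_iff_zsmul_eq_zero, hw] at h3
    obtain ⟨t, ht⟩ := h3
    refine ⟨j + p ^ m * t, ?_, ?_⟩
    · have : (p : ℤ) ^ N = p ^ (N - m) * p ^ m := by rw [← pow_add, Nat.sub_add_cancel hmN]
      push_cast at ht
      rw [this] at ht
      linear_combination ht
    · have : ((p : ℤ) ^ m * t) • z = 0 := by
        rw [← addOrderOf_dvd_iff_zsmul_eq_zero, hzo]
        push_cast
        exact dvd_mul_right _ _
      rw [add_smul, this, add_zero, ← h1, smul_neg]


/-- With `U`, `z`, `z'`, `w`, `w'`, `θ`, `θ'` as in the construction of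
`U(n-f, w, wθ, z)` and `U(n-f, w', w'θ', z')`, the two quotient Lie rings are isomorphic
if and only if there is a Lie ring automorphism `π` of `U` with `zπ = α·z'` for some
integer `α` coprime to `p`, and `π⁻¹(wθ)π = ad_r x + α·(w'θ')` for some `x ∈ U`. -/
theorem lieSD_quotient_iso_criterion
    (p f n : ℕ) (hp : p.Prime) (hf : 1 ≤ f) (hfn : f ≤ n)
    (U : Type) [LieRing U] [Finite U]
    -- P-1 : `U` is nilpotent, has additive coexponent `f`, and `μ₁(U) = μ₂(U) ≤ f`
    (hnil : IsNilpotentLieRing U)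
    (hcoexp : ∃ e : ℕ, AddMonoid.exponent U = p ^ e ∧ (f + aMuInv p U 1) - e = f)
    (hμeq : aMuInv p U 1 = aMuInv p U 2) (hμf : aMuInv p U 1 ≤ f)
    -- P-2 : `|U| = p ^ (f + μ₁(U))`
    (hcard : Nat.card U = p ^ (f + aMuInv p U 1))
    -- `n - f ≥ 2μ₁(U)`
    (hn : 2 * aMuInv p U 1 ≤ n - f)
    -- P-3 and the choices of `z`, `z'` : central elements of order `p ^ μ₁(U)`
    (z z' : U) (hzc : ∀ u : U, ⁅z, u⁆ = 0) (hzc' : ∀ u : U, ⁅z', u⁆ = 0)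
    (hzo : addOrderOf z = p ^ aMuInv p U 1) (hzo' : addOrderOf z' = p ^ aMuInv p U 1)
    -- `w`, `w'` generators of `ℤ/p^(n-f)ℤ`
    (w w' : ZMod (p ^ (n - f)))
    (hw : addOrderOf w = p ^ (n - f)) (hw' : addOrderOf w' = p ^ (n - f))
    -- `θ`, `θ'` Lie ring homomorphisms into `Der(U)_z` and `Der(U)_{z'}`
    (θ θ' : ZMod (p ^ (n - f)) →ₗ⁅ℤ⁆ LieDerivation ℤ U U)
    (hθz : ∀ c : ZMod (p ^ (n - f)), (θ c) z = 0)
    (hθz' : ∀ c : ZMod (p ^ (n - f)), (θ' c) z' = 0)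
    -- the Lie ideals generated by `p^(n-f-μ₁(U))·w - z` resp. `p^(n-f-μ₁(U))·w' - z'`
    (I : LieIdeal ℤ (LieSD U (p ^ (n - f)) θ))
    (hI : (I : Set (LieSD U (p ^ (n - f)) θ)) =
      (AddSubgroup.zmultiples
        (⟨-z, p ^ (n - f - aMuInv p U 1) • w⟩ : LieSD U (p ^ (n - f)) θ) :
          Set (LieSD U (p ^ (n - f)) θ)))
    (I' : LieIdeal ℤ (LieSD U (p ^ (n - f)) θ'))
    (hI' : (I' : Set (LieSD U (p ^ (n - f)) θ')) =
      (AddSubgroup.zmultiples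
        (⟨-z', p ^ (n - f - aMuInv p U 1) • w'⟩ : LieSD U (p ^ (n - f)) θ') :
          Set (LieSD U (p ^ (n - f)) θ'))) :
    -- `U(n-f,w,wθ,z) ≅ U(n-f,w',w'θ',z')` as Lie rings ...
    (∃ e : (LieSD U (p ^ (n - f)) θ ⧸ I) ≃+ (LieSD U (p ^ (n - f)) θ' ⧸ I'),
        ∀ a b : LieSD U (p ^ (n - f)) θ ⧸ I, e ⁅a, b⁆ = ⁅e a, e b⁆) ↔
      -- ... iff there is a Lie ring automorphism `π` of `U` such that
      ∃ π : U ≃+ U, (∀ x y : U, π ⁅x, y⁆ = ⁅π x, π y⁆) ∧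
        ∃ α : ℤ, IsCoprime α (p : ℤ) ∧
          -- (1) `zπ = α z'`
          π z = α • z' ∧
          -- (2) `π⁻¹(wθ)π = ad_r x + α(w'θ')` for some `x ∈ U`
          ∃ x : U, ∀ u : U, π ((θ w) (π.symm u)) = ⁅u, x⁆ + α • ((θ' w') u) := by
  generalize hm : aMuInv p U 1 = m at *
  generalize n - f = N at *
  have hp0 : (p : ℤ) ≠ 0 := by exact_mod_cast hp.ne_zero
  obtain ⟨e, hexp, hem⟩ := hcoexp
  obtain rfl : e = m := by omega
  have hR : ∀ u : U, ((p : ℤ) ^ e) • u = 0 := by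
    intro u
    rw [← Nat.cast_pow, natCast_zsmul, ← hexp]
    exact AddMonoid.exponent_nsmul_eq_zero u
  have he1 : e ≠ 0 := by
    rintro rfl
    rw [pow_zero] at hexp
    have := AddMonoid.exp_eq_one_iff.mp hexp
    rw [Nat.card_unique] at hcard
    have := Nat.one_lt_pow (n := f + 0) (by omega) hp.one_lt
    omega
  have hzk : ∀ y : U, addOrderOf y = p ^ e → ∀ k : ℤ, k • y = 0 → ((p : ℤ) ^ e) ∣ k := by
    intro y hy k hk
    rw [← addOrderOf_dvd_iff_zsmul_eq_zero, hy] at hk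
    exact_mod_cast hk
  have hRP : ((p : ℤ) ^ e) ∣ (p : ℤ) ^ (N - e) := pow_dvd_pow _ (by omega)
  have H := sd_pres p e N hp (by omega) z hzo w hw θ I hI
  have H' := sd_pres p e N hp (by omega) z' hzo' w' hw' θ' I' hI'
  constructor
  · rintro ⟨g, hg⟩
    obtain ⟨π, hπ, α, h1, x, h2⟩ := H.conv H' _ (pow_ne_zero e hp0) (pow_ne_zero (N - e) hp0)
      hR hRP (hzk z hzo) (hzk z' hzo') g hg
    refine ⟨π, hπ, α, ?_, h1, x, h2⟩
    rw [isCoprime_comm, Prime.coprime_iff_not_dvd (Nat.prime_iff_prime_int.mp hp)]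
    rintro ⟨c, rfl⟩
    obtain ⟨d, rfl⟩ := Nat.exists_eq_succ_of_ne_zero he1
    have h3 : ((p : ℤ) ^ d) • z = 0 := by
      apply π.injective
      rw [map_zsmul, h1, smul_smul, ← mul_assoc, ← pow_succ, mul_comm, mul_smul, hR, smul_zero,
        map_zero]
    have h4 := hzk z hzo _ h3
    have h5 : p ^ (d + 1) ∣ p ^ d := by exact_mod_cast h4
    have := (Nat.pow_dvd_pow_iff_le_right hp.one_lt).mp h5
    omega
  · rintro ⟨π, hπ, α, hα, h1, x, h2⟩
    refine H.iso (H'.twist _ (pow_ne_zero (N - e) hp0) hR hRP π hπ α ?_ h1 x h2)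
    rw [← pow_add]
    exact hα.pow_right
end
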